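/- arXiv:1512.05752 — 3 statements merged into one kernel-verified Lean document; each statement's English description precedes it below -/
import Mathlib

section
/- Let L be a finite-dimensional Leibniz algebra over a field F such that every two-generated proper subalgebra of L is supersolvable, L itself is not supersolvable, and φ(L) = 0. Then every proper subalgebra of L is supersolvable, i.e. L is minimally non-supersolvable. -/
/-!
Basic theory of (left) Leibniz algebras, formalized over an arbitrary field `F`.
A Leibniz algebra structure on an `F`-vector space `L` is given by a bilinear
multiplication `m : L →ₗ[F] L →ₗ[F] L` satisfying the left Leibniz identity.
-/

open Submodule Module

section LeibnizDefs

variable {F : Type*} [Field F] {L : Type*} [AddCommGroup L] [Module F L]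
variable (m : L →ₗ[F] L →ₗ[F] L)

/-- The left Leibniz identity: `a(bc) = (ab)c + b(ac)`. -/
def IsLeibniz : Prop :=
  ∀ a b c : L, m a (m b c) = m (m a b) c + m b (m a c)

/-- The multiplication is antisymmetric, i.e. the algebra is a Lie algebra. -/
def IsLie : Prop := ∀ a b : L, m a b = - m b a

/-- The product of two subspaces: the span of all products `x·y`, `x ∈ P`, `y ∈ Q`. -/
abbrev mprod (P Q : Submodule F L) : Submodule F L := Submodule.map₂ m P Q

/-- A subalgebra: a subspace closed under multiplication. -/
def IsSubalg (S : Submodule F L) : Prop := ∀ x ∈ S, ∀ y ∈ S, m x y ∈ S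

/-- An ideal of `L`: a subspace `I` with `L·I ⊆ I` and `I·L ⊆ I`. -/
def IsIdeal (I : Submodule F L) : Prop :=
  ∀ (x : L), ∀ y ∈ I, m x y ∈ I ∧ m y x ∈ I

/-- An ideal `I` of a subalgebra `S`. -/
def IsIdealOf (S I : Submodule F L) : Prop :=
  I ≤ S ∧ ∀ x ∈ S, ∀ y ∈ I, m x y ∈ I ∧ m y x ∈ I

/-- A minimal ideal: a nonzero ideal containing no nonzero proper subideal of `L`. -/
def IsMinIdeal (A : Submodule F L) : Prop :=
  IsIdeal m A ∧ A ≠ ⊥ ∧ ∀ J, IsIdeal m J → J ≤ A → J = ⊥ ∨ J = A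

/-- The derived series of a subspace: `S^(0) = S`, `S^(n+1) = S^(n)·S^(n)`. -/
def derSeries (S : Submodule F L) : ℕ → Submodule F L
  | 0 => S
  | n + 1 => mprod m (derSeries S n) (derSeries S n)

/-- A subalgebra is solvable if its derived series reaches `0`. -/
def IsSolvableSub (S : Submodule F L) : Prop := ∃ n, derSeries m S n = ⊥

/-- The Leibniz algebra `L` is solvable. -/
abbrev IsSolvableAlg : Prop := IsSolvableSub m (⊤ : Submodule F L)

/-- The lower central series of a subspace: `N^1 = N`, `N^(k+1) = N·N^k`. -/
def lcSeries (N : Submodule F L) : ℕ → Submodule F L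
  | 0 => N
  | k + 1 => mprod m N (lcSeries N k)

/-- A subalgebra is nilpotent if its lower central series reaches `0`. -/
def IsNilpotentSub (N : Submodule F L) : Prop := ∃ k, lcSeries m N k = ⊥

/-- A subalgebra `S` is strongly solvable if `S² = S·S` is nilpotent. -/
def IsStronglySolvable (S : Submodule F L) : Prop :=
  IsNilpotentSub m (mprod m S S)

/-- A maximal subalgebra: a proper subalgebra not contained in any larger proper
subalgebra. -/
def IsMaxSubalg (S : Submodule F L) : Prop :=
  IsSubalg m S ∧ S ≠ ⊤ ∧ ∀ T, IsSubalg m T → S ≤ T → T = S ∨ T = ⊤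

/-- The Frattini subalgebra `F(L)`: the intersection of all maximal subalgebras. -/
def frattiniSub : Submodule F L := sInf {S | IsMaxSubalg m S}

/-- The Frattini ideal `φ(L)`: the largest ideal contained in the Frattini
subalgebra. -/
def frattiniIdeal : Submodule F L :=
  sSup {I | IsIdeal m I ∧ I ≤ frattiniSub m}

/-- `Leib(L)`: the span of all squares `x·x`. -/
def leibIdeal : Submodule F L := Submodule.span F {z | ∃ x : L, z = m x x}

/-- The subalgebra generated by a set. -/
def genBy (s : Set L) : Submodule F L := sInf {S | IsSubalg m S ∧ s ⊆ S}

/-- A subalgebra is two-generated if it is generated as an algebra by two elements. -/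
def TwoGenerated (S : Submodule F L) : Prop := ∃ x y : L, genBy m {x, y} = S

/-- A subalgebra `S` is supersolvable if there is a chain of ideals of `S`,
`0 = S₀ ⊂ S₁ ⊂ ⋯ ⊂ Sₙ = S`, with `dim Sᵢ = i`. -/
def IsSupersolvable (S : Submodule F L) : Prop :=
  ∃ (n : ℕ) (c : ℕ → Submodule F L), c 0 = ⊥ ∧ c n = S ∧
    (∀ i, i < n → c i ≤ c (i + 1)) ∧
    (∀ i, i ≤ n → IsIdealOf m S (c i)) ∧
    (∀ i, i ≤ n → Module.finrank F (c i) = i)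

/-- A subspace `S` is nil on `L` if left multiplication by each of its elements is a
nilpotent operator. -/
def IsNilOn (S : Submodule F L) : Prop :=
  ∀ x ∈ S, IsNilpotent (m x : Module.End F L)

open scoped TensorProduct in
/-- A subspace `S` is triangulable on `L` if, after extending scalars to the algebraic
closure `K` of `F`, the space `K ⊗ L` admits a basis with respect to which the left
multiplication operators by all elements of `K ⊗ S` are upper triangular matrices.
(Since upper triangular matrices form a `K`-subspace of matrices, it suffices that the
base-changed left multiplication by each `x ∈ S` is upper triangular.) -/
def IsTriangulableOn (S : Submodule F L) : Prop :=
  ∃ (n : ℕ) (b : Basis (Fin n) (AlgebraicClosure F) ((AlgebraicClosure F) ⊗[F] L)),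
    ∀ x ∈ S, ∀ i j : Fin n, j < i →
      LinearMap.toMatrix b b (LinearMap.baseChange (AlgebraicClosure F) (m x)) i j = 0

end LeibnizDefs

/-!
Let every two-generated subalgebra of `S` be supersolvable. Working up the chief factors `B / A` of
`S` by induction on `dim S - dim A`, one may assume that the action on `S / X` is supersolvable for
all ideals `X > A` of `S`, and that so is the action of `T` on `T / A` for all subalgebras
`A ≤ T < S`.

The key point is that a subalgebra `M` acting irreducibly on a section `W / U` of `S`, with `M`
supersolvable modulo elements acting as zero, acts by scalars. If `a` and `v` are generalized
eigenvectors of left multiplication by `b` for different eigenvalues, then both lie in the algebra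
generated by `b` and `a + v`. This algebra is supersolvable, so its products act nilpotently; hence
`b a` acts nilpotently on `v`, which rules out all nonscalar actions.

If `B / A` has zero multiplication, this gives a one-dimensional ideal of `S / A`. Otherwise
`B = S`, since `B / A` is perfect. For a maximal subalgebra `M` of `S` containing `A`, a common
eigenvector of `M` on `S / M` and one on `M / A` then generate `S` modulo `A`.
-/

section Submodules

variable {R V : Type*} [Ring R] [AddCommGroup V] [Module R V]

theorem exists_minimal_le_of_isArtinian {W : Submodule R V} [IsArtinian R W]
    {P : Submodule R V → Prop} (hW : P W) : ∃ X ≤ W, Minimal P X := by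
  have : WellFoundedLT (Set.Iic W) := W.mapIic.symm.toOrderEmbedding.wellFoundedLT
  obtain ⟨X, -, hX⟩ := exists_minimal_le_of_wellFoundedLT
    (fun X : Set.Iic W ↦ P X) ⟨W, le_refl W⟩ hW
  exact ⟨X, X.2, hX.1, fun Y hY hYX ↦ hX.2 (y := ⟨Y, hYX.trans X.2⟩) hY hYX⟩

theorem exists_maximal_ge_of_isNoetherian {W A : Submodule R V} [IsNoetherian R W]
    {P : Submodule R V → Prop} (hPW : ∀ X, P X → X ≤ W) (hA : P A) :
    ∃ X ≥ A, Maximal P X := by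
  have : WellFoundedGT (Set.Iic W) := W.mapIic.symm.toOrderEmbedding.wellFoundedGT
  obtain ⟨X, hAX, hX⟩ := exists_maximal_ge_of_wellFoundedGT
    (fun X : Set.Iic W ↦ P X) ⟨A, hPW A hA⟩ hA
  exact ⟨X, hAX, hX.1, fun Y hY hXY ↦ hX.2 (y := ⟨Y, hPW Y hY⟩) hY hXY⟩

theorem pow_sub_pow_apply_mem {f g : End R V} {U W : Submodule R V} (hfU : ∀ u ∈ U, f u ∈ U)
    (hgW : ∀ w ∈ W, g w ∈ W) (hfg : ∀ w ∈ W, f w - g w ∈ U) (n : ℕ) {w : V} (hw : w ∈ W) :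
    (f ^ n) w - (g ^ n) w ∈ U := by
  induction n generalizing w with
  | zero => simp
  | succ n ih =>
    have hgn : (g ^ n) w ∈ W := Module.End.pow_apply_mem_of_forall_mem n hgW w hw
    rw [pow_succ', pow_succ', Module.End.mul_apply, Module.End.mul_apply,
      ← sub_add_sub_cancel _ (f ((g ^ n) w)), ← map_sub]
    exact add_mem (hfU _ (ih hw)) (hfg _ hgn)

end Submodules

theorem exists_sub_mem_maxGenEigenspace {R V : Type*} [CommRing R] [AddCommGroup V]
    [Module R V] {f : End R V} {p : Submodule R V} [IsArtinian R p] (hf : ∀ x ∈ p, f x ∈ p) {a : V}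
    {μ : R} (ha : f a - μ • a ∈ p) :
    ∃ c ∈ p, a - c ∈ f.maxGenEigenspace μ := by
  set g : End R V := f - μ • 1
  have hg : ∀ x ∈ p, g x ∈ p := fun x hx ↦ sub_mem (hf x hx) (p.smul_mem μ hx)
  obtain ⟨n, hn⟩ := IsArtinian.monotone_stabilizes (g.restrict hg).iterateRange
  have hrange : LinearMap.range (g.restrict hg ^ n) = LinearMap.range (g.restrict hg ^ (n + 1)) :=
    hn (n + 1) n.le_succ
  obtain ⟨c, hc⟩ := hrange.le (LinearMap.mem_range_self _ ⟨g a, ha⟩)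
  have hc' : (g ^ (n + 1)) c = (g ^ (n + 1)) a := by
    have h := congrArg Subtype.val hc
    rw [Module.End.pow_restrict, Module.End.pow_restrict] at h
    simpa [pow_succ] using h
  exact ⟨c, c.2, (f.mem_maxGenEigenspace μ _).2 ⟨n + 1, by rw [map_sub, hc', sub_self]⟩⟩

section Operators

variable {F V : Type*} [Field F] [AddCommGroup V] [Module F V]

theorem mem_sup_span_singleton_iff {p : Submodule F V} {d x : V} :
    x ∈ p ⊔ F ∙ d ↔ ∃ i ∈ p, ∃ t : F, i + t • d = x := by
  simp only [Submodule.mem_sup, mem_span_singleton, exists_exists_eq_and]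

theorem mem_of_add_mem_of_mem_maxGenEigenspace {f : End F V} {p : Submodule F V}
    (hf : ∀ x ∈ p, f x ∈ p) {x y : V} {α β : F} (hαβ : α ≠ β) (hx : x ∈ f.maxGenEigenspace α)
    (hy : y ∈ f.maxGenEigenspace β) (hxy : x + y ∈ p) : x ∈ p := by
  obtain ⟨i, hi⟩ := (f.mem_maxGenEigenspace α x).1 hx
  obtain ⟨j, hj⟩ := (f.mem_maxGenEigenspace β y).1 hy
  obtain ⟨u, v, huv⟩ : IsCoprime ((Polynomial.X - Polynomial.C α) ^ i)
      ((Polynomial.X - Polynomial.C β) ^ j) :=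
    (Polynomial.isCoprime_X_sub_C_of_isUnit_sub (sub_ne_zero.2 hαβ).isUnit).pow
  have haeval (μ : F) (k : ℕ) :
      Polynomial.aeval f ((Polynomial.X - Polynomial.C μ) ^ k) = (f - μ • 1) ^ k := by
    simp [Algebra.algebraMap_eq_smul_one]
  have hx' : Polynomial.aeval f (v * (Polynomial.X - Polynomial.C β) ^ j) (x + y) = x := by
    have h1 := congrArg (fun q ↦ Polynomial.aeval f q x) huv
    simp only [map_add, map_mul, haeval, LinearMap.add_apply, Module.End.mul_apply, hi, map_zero,
      zero_add, map_one, Module.End.one_apply] at h1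
    simp only [map_mul, haeval, map_add, Module.End.mul_apply, hj, map_zero, add_zero, h1]
  exact hx' ▸ Polynomial.aeval_apply_smul_mem_of_le_comap hxy _ f hf

end Operators

section Ideals

variable {F L : Type*} [Field F] [AddCommGroup L] [Module F L] {m : L →ₗ[F] L →ₗ[F] L}
  {S T A B C I J U W : Submodule F L}

theorem IsLeibniz.mul_mul (hm : IsLeibniz m) (a b c : L) :
    m (m a b) c = m a (m b c) - m b (m a c) :=
  eq_sub_of_add_eq (hm a b c).symm

theorem IsLeibniz.mul_add_mul_mul (hm : IsLeibniz m) (a b c : L) :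
    m (m a b + m b a) c = 0 := by
  rw [map_add, LinearMap.add_apply, hm.mul_mul, hm.mul_mul, sub_add_sub_cancel, sub_self]

theorem isSubalg_genBy (s : Set L) : IsSubalg m (genBy m s) := by
  simp only [IsSubalg, genBy, Submodule.mem_sInf]
  exact fun x hx y hy T hT ↦ hT.1 x (hx T hT) y (hy T hT)

theorem subset_genBy (s : Set L) : s ⊆ genBy m s := by
  intro x hx
  simp only [genBy, SetLike.mem_coe, Submodule.mem_sInf]
  exact fun T hT ↦ hT.2 hx

theorem genBy_le {s : Set L} (hS : IsSubalg m S) (hs : s ⊆ S) : genBy m s ≤ S :=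
  sInf_le ⟨hS, hs⟩

theorem isIdealOf_self (hS : IsSubalg m S) : IsIdealOf m S S :=
  ⟨le_rfl, fun x hx y hy ↦ ⟨hS x hx y hy, hS y hy x hx⟩⟩

theorem isIdealOf_bot : IsIdealOf m S ⊥ := by
  refine ⟨bot_le, fun x _ y hy ↦ ?_⟩
  simp [(Submodule.mem_bot F).1 hy]

namespace IsIdealOf

theorem mul_mem_left (hI : IsIdealOf m S I) {x y : L} (hx : x ∈ S) (hy : y ∈ I) : m x y ∈ I :=
  (hI.2 x hx y hy).1

theorem mul_mem_right (hI : IsIdealOf m S I) {x y : L} (hx : x ∈ S) (hy : y ∈ I) : m y x ∈ I :=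
  (hI.2 x hx y hy).2

theorem isSubalg (hI : IsIdealOf m S I) : IsSubalg m I :=
  fun _ hx _ hy ↦ hI.mul_mem_left (hI.1 hx) hy

theorem mono (hI : IsIdealOf m S I) (hIT : I ≤ T) (hTS : T ≤ S) : IsIdealOf m T I :=
  ⟨hIT, fun x hx ↦ hI.2 x (hTS hx)⟩

theorem sup_of_sup (hA : IsIdealOf m (T ⊔ A) A) (hJ : IsIdealOf m T J) :
    IsIdealOf m (T ⊔ A) (J ⊔ A) := by
  refine ⟨sup_le_sup_right hJ.1 A, fun x hx y hy ↦ ?_⟩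
  obtain ⟨t, ht, a, ha, rfl⟩ := Submodule.mem_sup.1 hx
  obtain ⟨j, hj, b, hb, rfl⟩ := Submodule.mem_sup.1 hy
  have hj' : j ∈ T ⊔ A := mem_sup_left (hJ.1 hj)
  constructor
  · have h : m (t + a) (j + b) = m t j + (m a j + m (t + a) b) := by
      simp only [map_add, LinearMap.add_apply, add_assoc]
    exact h ▸ Submodule.add_mem_sup (hJ.mul_mem_left ht hj)
      (add_mem (hA.mul_mem_right hj' ha) (hA.mul_mem_left hx hb))
  · have h : m (j + b) (t + a) = m j t + (m j a + m b (t + a)) := by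
      simp only [map_add, LinearMap.add_apply]
      abel
    exact h ▸ Submodule.add_mem_sup (hJ.mul_mem_right ht hj)
      (add_mem (hA.mul_mem_left hj' ha) (hA.mul_mem_right hx hb))

theorem mprod_sup (hm : IsLeibniz m) (hB : IsIdealOf m S B) (hA : IsIdealOf m S A) :
    IsIdealOf m S (mprod m B B ⊔ A) := by
  refine ⟨sup_le (Submodule.map₂_le.2 fun b hb c hc ↦ hB.1 (hB.isSubalg b hb c hc)) hA.1,
    fun x hx y hy ↦ ?_⟩
  set P := mprod m B B
  suffices h : P ≤ P.comap (m x) ⊓ P.comap (m.flip x) by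
    obtain ⟨p, hp, a, ha, rfl⟩ := Submodule.mem_sup.1 hy
    rw [map_add, map_add, LinearMap.add_apply]
    exact ⟨Submodule.add_mem_sup (h hp).1 (hA.mul_mem_left hx ha),
      Submodule.add_mem_sup (h hp).2 (hA.mul_mem_right hx ha)⟩
  refine Submodule.map₂_le.2 fun b hb c hc ↦ ⟨?_, ?_⟩
  · change m x (m b c) ∈ P
    rw [hm]
    exact add_mem (Submodule.apply_mem_map₂ m (hB.mul_mem_left hx hb) hc)
      (Submodule.apply_mem_map₂ m hb (hB.mul_mem_left hx hc))
  · change m (m b c) x ∈ P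
    rw [hm.mul_mul]
    exact sub_mem (Submodule.apply_mem_map₂ m hb (hB.mul_mem_right hx hc))
      (Submodule.apply_mem_map₂ m hc (hB.mul_mem_right hx hb))

end IsIdealOf

variable (m) in
/-- The element `x` acts by left multiplication on the section `W / U` as the scalar `ν`. -/
def ActsAsScalar (U W : Submodule F L) (x : L) (ν : F) : Prop :=
  ∀ w ∈ W, m x w - ν • w ∈ U

theorem actsAsScalar_zero {x : L} : ActsAsScalar m U W x 0 ↔ ∀ w ∈ W, m x w ∈ U := by
  simp only [ActsAsScalar, zero_smul, sub_zero]

namespace ActsAsScalar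

theorem add {x y : L} {μ ν : F} (hx : ActsAsScalar m U W x μ) (hy : ActsAsScalar m U W y ν) :
    ActsAsScalar m U W (x + y) (μ + ν) := by
  intro w hw
  rw [map_add, LinearMap.add_apply, add_smul, add_sub_add_comm]
  exact add_mem (hx w hw) (hy w hw)

theorem smul {x : L} {ν : F} (hx : ActsAsScalar m U W x ν) (t : F) :
    ActsAsScalar m U W (t • x) (t * ν) := by
  intro w hw
  rw [map_smul, LinearMap.smul_apply, mul_smul, ← smul_sub]
  exact U.smul_mem t (hx w hw)

theorem mul_left (hm : IsLeibniz m) {b x : L} {ν : F} (hbU : ∀ u ∈ U, m b u ∈ U)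
    (hbW : ∀ w ∈ W, m b w ∈ W) (hx : ActsAsScalar m U W x ν) : ActsAsScalar m U W (m b x) 0 := by
  refine actsAsScalar_zero.2 fun w hw ↦ ?_
  have h : m (m b x) w = m b (m x w - ν • w) - (m x (m b w) - ν • m b w) := by
    rw [hm.mul_mul, map_sub, map_smul]
    abel
  exact h ▸ sub_mem (hbU _ (hx w hw)) (hx _ (hbW w hw))

theorem swap (hm : IsLeibniz m) {a b : L} {ν : F} (hab : ActsAsScalar m U W (m a b) ν) :
    ActsAsScalar m U W (m b a) (-ν) := by
  intro w hw
  have h : m (m b a) w - -ν • w = -(m (m a b) w - ν • w) := by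
    rw [hm.mul_mul, hm.mul_mul]
    module
  exact h ▸ neg_mem (hab w hw)

theorem mul_right (hm : IsLeibniz m) {b x : L} {ν : F} (hbU : ∀ u ∈ U, m b u ∈ U)
    (hbW : ∀ w ∈ W, m b w ∈ W) (hx : ActsAsScalar m U W x ν) : ActsAsScalar m U W (m x b) 0 :=
  neg_zero (G := F) ▸ (hx.mul_left hm hbU hbW).swap hm

end ActsAsScalar

theorem IsIdealOf.exists_actsAsScalar {d x : L} (hI : IsIdealOf m S I)
    (hId : IsIdealOf m S (I ⊔ F ∙ d)) (hx : x ∈ S) : ∃ ν, ActsAsScalar m I (I ⊔ F ∙ d) x ν := by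
  have hd : d ∈ I ⊔ F ∙ d := mem_sup_right (mem_span_singleton_self d)
  obtain ⟨i, hi, ν, hxd⟩ := mem_sup_span_singleton_iff.1 (hId.mul_mem_left hx hd)
  refine ⟨ν, fun w hw ↦ ?_⟩
  obtain ⟨j, hj, t, rfl⟩ := mem_sup_span_singleton_iff.1 hw
  have h : m x (j + t • d) - ν • (j + t • d) = m x j - ν • j + t • i := by
    rw [map_add, map_smul, ← hxd]
    module
  exact h ▸ add_mem (sub_mem (hI.mul_mem_left hx hj) (I.smul_mem ν hj)) (I.smul_mem t hi)

theorem IsIdealOf.mul_mul_mem (hm : IsLeibniz m) {a b d w : L} (hI : IsIdealOf m S I)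
    (hId : IsIdealOf m S (I ⊔ F ∙ d)) (ha : a ∈ S) (hb : b ∈ S) (hw : w ∈ I ⊔ F ∙ d) :
    m (m a b) w ∈ I := by
  obtain ⟨ν, hν⟩ := hI.exists_actsAsScalar hId hb
  exact actsAsScalar_zero.1 (hν.mul_left hm (fun u ↦ hI.mul_mem_left ha)
    fun v ↦ hId.mul_mem_left ha) w hw

variable (m S A) in
/-- `IdealChain m S A J` says that `J` is reached from `A` by a finite chain of ideals of `S` each
of which is spanned by the previous one and at most one further element. For `A = ⊥` and `J = S`
this is supersolvability, and in general it stands for supersolvability of the action of `S` on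
`J / A`, without forming quotients. -/
inductive IdealChain : Submodule F L → Prop
  | refl : IsIdealOf m S A → IdealChain A
  | adjoin {I : Submodule F L} (d : L) :
    IdealChain I → IsIdealOf m S (I ⊔ F ∙ d) → IdealChain (I ⊔ F ∙ d)

namespace IdealChain

theorem isIdealOf (h : IdealChain m S A J) : IsIdealOf m S J := by
  cases h with
  | refl hA => exact hA
  | adjoin d _ hId => exact hId

theorem trans (hAB : IdealChain m S A B) (hBC : IdealChain m S B C) : IdealChain m S A C := by
  induction hBC with
  | refl _ => exact hAB
  | adjoin d _ hId ih => exact ih.adjoin d hId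

theorem exists_adjoin_of_ne (h : IdealChain m S A J) (hJA : J ≠ A) :
    ∃ z ∈ J, z ∉ A ∧ IsIdealOf m S (A ⊔ F ∙ z) := by
  induction h with
  | refl _ => exact absurd rfl hJA
  | @adjoin I d _ hId ih =>
    by_cases hIA : I = A
    · subst hIA
      exact ⟨d, mem_sup_right (mem_span_singleton_self d), by simpa using hJA, hId⟩
    · obtain ⟨z, hz, h⟩ := ih hIA
      exact ⟨z, mem_sup_left hz, h⟩

theorem sup_of_sup (hA : IsIdealOf m (T ⊔ A) A) (h : IdealChain m T ⊥ J) :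
    IdealChain m (T ⊔ A) A (J ⊔ A) := by
  induction h with
  | refl _ => exact (bot_sup_eq A).symm ▸ .refl hA
  | @adjoin _ d _ hId ih =>
    have h := hA.sup_of_sup hId
    rw [sup_right_comm] at h ⊢
    exact ih.adjoin d h

theorem exists_pow_mul_mul_mem (hm : IsLeibniz m) {a b : L} (ha : a ∈ S) (hb : b ∈ S)
    (h : IdealChain m S A J) : ∃ n : ℕ, ∀ t ∈ J, ((m (m a b) : End F L) ^ n) t ∈ A := by
  induction h with
  | refl _ => exact ⟨0, fun t ht ↦ ht⟩
  | @adjoin _ _ hI hId ih =>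
    obtain ⟨n, hn⟩ := ih
    refine ⟨n + 1, fun t ht ↦ ?_⟩
    rw [pow_succ, Module.End.mul_apply]
    exact hn _ (hI.isIdealOf.mul_mul_mem hm hId ha hb ht)

theorem base_le (h : IdealChain m S A J) : A ≤ J := by
  induction h with
  | refl _ => exact le_rfl
  | adjoin d _ _ ih => exact ih.trans le_sup_left

theorem le_of_le_mprod_sup (hm : IsLeibniz m) (hA : IsIdealOf m S A) (hS : S ≤ mprod m S S ⊔ A)
    (h : IdealChain m S A J) (hSJ : S ≤ J) : S ≤ A := by
  induction h with
  | refl _ => exact hSJ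
  | @adjoin I _ hI hId ih =>
    have hmul : ∀ x ∈ S, ∀ y ∈ S, m x y ∈ I := by
      intro x hx y hy
      obtain ⟨p, hp, a, ha, rfl⟩ := Submodule.mem_sup.1 (hS hx)
      have hP : mprod m S S ≤ I.comap (m.flip y) :=
        Submodule.map₂_le.2 fun b hb c hc ↦ hI.isIdealOf.mul_mul_mem hm hId hb hc (hSJ hy)
      rw [map_add, LinearMap.add_apply]
      exact add_mem (hP hp) (hI.base_le (hA.mul_mem_right hy ha))
    exact ih (hS.trans (sup_le (Submodule.map₂_le.2 hmul) hI.base_le))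

end IdealChain

theorem finrank_sup_span_singleton_of_notMem [FiniteDimensional F I] {d : L} (hd : d ∉ I) :
    finrank F (I ⊔ F ∙ d : Submodule F L) = finrank F I + 1 := by
  have hd0 : d ≠ 0 := fun h ↦ hd (h ▸ I.zero_mem)
  have hdisj : Disjoint I (F ∙ d) := (Submodule.disjoint_span_singleton' hd0).2 hd
  have h := Submodule.finrank_sup_add_finrank_inf_eq I (F ∙ d)
  rwa [hdisj.eq_bot, finrank_bot, add_zero, finrank_span_singleton hd0] at h

theorem IsSupersolvable.idealChain (h : IsSupersolvable m S) : IdealChain m S ⊥ S := by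
  obtain ⟨n, c, hc0, rfl, hmono, hideal, hrank⟩ := h
  suffices hchain : ∀ i ≤ n, IdealChain m (c n) ⊥ (c i) from hchain n le_rfl
  intro i
  induction i with
  | zero => exact fun _ ↦ hc0.symm ▸ .refl isIdealOf_bot
  | succ i ih =>
    intro hi
    have hci := hrank i (by lia)
    have hci' := hrank (i + 1) hi
    have : FiniteDimensional F (c (i + 1)) := .of_finrank_pos (by lia)
    have : FiniteDimensional F (c i) := Submodule.finiteDimensional_of_le (hmono i hi)
    obtain ⟨d, hd, hdi⟩ := SetLike.not_le_iff_exists.1 fun hle : c (i + 1) ≤ c i ↦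
      absurd (Submodule.finrank_mono hle) (by lia)
    have heq : c i ⊔ F ∙ d = c (i + 1) :=
      Submodule.eq_of_le_of_finrank_le (sup_le (hmono i hi) ((span_singleton_le_iff_mem d _).2 hd))
        (by rw [finrank_sup_span_singleton_of_notMem hdi, hci, hci'])
    exact heq ▸ (ih (by lia)).adjoin d (heq.symm ▸ hideal (i + 1) hi)

theorem IdealChain.isSupersolvable (h : IdealChain m S ⊥ S) : IsSupersolvable m S := by
  suffices hchain : ∀ J, IdealChain m S ⊥ J → FiniteDimensional F J ∧
      ∃ (n : ℕ) (c : ℕ → Submodule F L), c 0 = ⊥ ∧ c n = J ∧ (∀ i, i < n → c i ≤ c (i + 1)) ∧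
        (∀ i, i ≤ n → IsIdealOf m S (c i)) ∧ ∀ i, i ≤ n → finrank F (c i) = i from
    (hchain S h).2
  intro J hJ
  induction hJ with
  | refl h0 =>
    refine ⟨inferInstance, 0, fun _ ↦ ⊥, rfl, rfl, by simp, fun _ _ ↦ h0, fun i hi ↦ ?_⟩
    rw [finrank_bot, Nat.le_zero.1 hi]
  | @adjoin I d _ hId ih =>
    by_cases hd : d ∈ I
    · rwa [sup_eq_left.2 ((span_singleton_le_iff_mem d I).2 hd)]
    obtain ⟨hfin, n, c, hc0, rfl, hmono, hideal, hrank⟩ := ih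
    refine ⟨inferInstance, n + 1, Function.update c (n + 1) (c n ⊔ F ∙ d), ?_, ?_, ?_, ?_, ?_⟩
    · simpa using hc0
    · simp
    · intro i hi
      rcases Nat.lt_succ_iff_lt_or_eq.1 hi with hi | rfl
      · rw [Function.update_of_ne (by lia), Function.update_of_ne (by lia)]
        exact hmono i hi
      · simp
    · intro i hi
      rcases Nat.le_succ_iff.1 hi with hi | rfl
      · rw [Function.update_of_ne (by lia)]
        exact hideal i hi
      · simpa using hId
    · intro i hi
      rcases Nat.le_succ_iff.1 hi with hi | rfl
      · rw [Function.update_of_ne (by lia)]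
        exact hrank i hi
      · rw [Function.update_self, finrank_sup_span_singleton_of_notMem hd, hrank n le_rfl]

end Ideals

section Sections

variable {F L : Type*} [Field F] [AddCommGroup L] [Module F L] {m : L →ₗ[F] L →ₗ[F] L}
  {S M A U W J : Submodule F L}

variable (m) in
/-- Every two-generated subalgebra of `S` is supersolvable. -/
def IsTwoGenSupersolvable (S : Submodule F L) : Prop :=
  ∀ x ∈ S, ∀ y ∈ S, IsSupersolvable m (genBy m {x, y})

theorem IsTwoGenSupersolvable.mono {T : Submodule F L} (hS : IsTwoGenSupersolvable m S)
    (hTS : T ≤ S) : IsTwoGenSupersolvable m T :=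
  fun x hx y hy ↦ hS x (hTS hx) y (hTS hy)

theorem IdealChain.inf_le_or_exists_eigenvector {T : Submodule F L} (h : IdealChain m T ⊥ J)
    {b : L} (hb : b ∈ T) (hbW : ∀ w ∈ W, m b w ∈ W) :
    J ⊓ W ≤ U ∨ ∃ w ∈ W, w ∉ U ∧ ∃ ν : F, m b w - ν • w ∈ U := by
  induction h with
  | refl _ => simp
  | @adjoin _ _ hI hId ih =>
    refine ih.elim (fun hIU ↦ or_iff_not_imp_left.2 fun hU ↦ ?_) .inr
    obtain ⟨w, hw, hwU⟩ := SetLike.not_le_iff_exists.1 hU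
    obtain ⟨ν, hν⟩ := hI.isIdealOf.exists_actsAsScalar hId hb
    exact ⟨w, hw.2, hwU, ν, hIU ⟨hν w hw.1, sub_mem (hbW w hw.2) (W.smul_mem ν hw.2)⟩⟩

theorem IsTwoGenSupersolvable.exists_eigenvector (h2 : IsTwoGenSupersolvable m S) (hWS : W ≤ S)
    (hWU : ¬W ≤ U) {b : L} (hb : b ∈ S) (hbW : ∀ w ∈ W, m b w ∈ W) :
    ∃ w ∈ W, w ∉ U ∧ ∃ ν : F, m b w - ν • w ∈ U := by
  obtain ⟨w, hw, hwU⟩ := SetLike.not_le_iff_exists.1 hWU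
  have hbw : {b, w} ⊆ (genBy m {b, w} : Set L) := subset_genBy _
  have h := (h2 b hb w (hWS hw)).idealChain.inf_le_or_exists_eigenvector (U := U)
    (hbw (by simp)) hbW
  exact h.resolve_left fun hU ↦ hwU (hU ⟨hbw (by simp), hw⟩)

theorem mem_genBy_of_mem_maxGenEigenspace {b x y : L} {α β : F} (hαβ : α ≠ β)
    (hx : x ∈ End.maxGenEigenspace (m b) α) (hy : y ∈ End.maxGenEigenspace (m b) β) :
    x ∈ genBy m {b, x + y} ∧ y ∈ genBy m {b, x + y} := by
  have hb : b ∈ genBy m {b, x + y} := subset_genBy _ (by simp)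
  have hxy : x + y ∈ genBy m {b, x + y} := subset_genBy _ (by simp)
  have hx' := mem_of_add_mem_of_mem_maxGenEigenspace (isSubalg_genBy _ b hb) hαβ hx hy hxy
  exact ⟨hx', (Submodule.add_mem_iff_right _ hx').1 hxy⟩

variable (m) in
/-- The subalgebra `M` of `S` acts by left multiplication on the section `W / U` of `S`. -/
structure IsStableSection (S M U W : Submodule F L) : Prop where
  isSubalg : IsSubalg m M
  subalg_le : M ≤ S
  bot_le_top : U ≤ W
  top_le : W ≤ S
  mul_mem_bot : ∀ x ∈ M, ∀ u ∈ U, m x u ∈ U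
  mul_mem_top : ∀ x ∈ M, ∀ w ∈ W, m x w ∈ W

variable (m) in
/-- The elements of `M` that act by left multiplication on `W / U` as scalars. -/
def scalarActors (M U W : Submodule F L) : Submodule F L where
  carrier := {x | x ∈ M ∧ ∃ ν, ActsAsScalar m U W x ν}
  zero_mem' := ⟨M.zero_mem, 0, by simp [ActsAsScalar]⟩
  add_mem' := fun ⟨hx, _, hμ⟩ ⟨hy, _, hν⟩ ↦ ⟨M.add_mem hx hy, _, hμ.add hν⟩
  smul_mem' := fun t _ ⟨hx, _, hν⟩ ↦ ⟨M.smul_mem t hx, _, hν.smul t⟩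

namespace IsStableSection

theorem actsAsScalar_mul_left (hsec : IsStableSection m S M U W) (hm : IsLeibniz m) {b x : L}
    (hb : b ∈ M) (hx : x ∈ scalarActors m M U W) : ActsAsScalar m U W (m b x) 0 :=
  hx.2.choose_spec.mul_left hm (hsec.mul_mem_bot b hb) (hsec.mul_mem_top b hb)

theorem mul_mem_scalarActors (hsec : IsStableSection m S M U W) (hm : IsLeibniz m) {b x : L}
    (hb : b ∈ M) (hx : x ∈ scalarActors m M U W) : m b x ∈ scalarActors m M U W :=
  ⟨hsec.isSubalg b hb x hx.1, 0, hsec.actsAsScalar_mul_left hm hb hx⟩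

theorem mem_of_pow_mem_of_actsAsScalar (hsec : IsStableSection m S M U W) {x w : L} {ν : F}
    (hx : x ∈ M) (hν : ActsAsScalar m U W x ν) (hν0 : ν ≠ 0) (hw : w ∈ W) {n : ℕ}
    (hn : ((m x : End F L) ^ n) w ∈ U) : w ∈ U := by
  have h := pow_sub_pow_apply_mem (f := m x) (g := ν • 1) (hsec.mul_mem_bot x hx)
    (fun w hw ↦ W.smul_mem ν hw) hν n hw
  rw [smul_pow, one_pow, LinearMap.smul_apply, Module.End.one_apply, U.sub_mem_iff_right hn] at h
  exact (U.smul_mem_iff (pow_ne_zero n hν0)).1 h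

theorem exists_eigenvector_ne_one (hsec : IsStableSection m S M U W) (hm : IsLeibniz m)
    (h2 : IsTwoGenSupersolvable m S) (hWU : ¬W ≤ U) {q e : L} (hq : q ∈ M) (he : e ∈ M)
    (hqe : ActsAsScalar m U W (m q e - e) 0) (hinj : ∀ w ∈ W, m e w ∈ U → w ∈ U) :
    ∃ w ∈ W, w ∉ U ∧ ∃ ν : F, ν ≠ 1 ∧ m q w - ν • w ∈ U := by
  obtain ⟨v, hv, hvU, ν, hqv⟩ := h2.exists_eigenvector hsec.top_le hWU (hsec.subalg_le hq)
    (hsec.mul_mem_top q hq)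
  by_cases hν : ν = 1
  · subst hν
    refine ⟨m e v, hsec.mul_mem_top e he v hv, fun h ↦ hvU (hinj v hv h), 1 + 1, by simp, ?_⟩
    have h : m q (m e v) - (1 + 1 : F) • m e v
        = m (m q e - e) v + m e (m q v - (1 : F) • v) := by
      rw [hm q e v]
      simp only [map_sub, LinearMap.sub_apply, map_smul]
      module
    exact h ▸ add_mem (actsAsScalar_zero.1 hqe v hv) (hsec.mul_mem_bot e he _ hqv)
  · exact ⟨v, hv, hvU, ν, hν, hqv⟩

variable [FiniteDimensional F S]

/-- Corrections `c` and `u` turn `a` and `v` into generalized eigenvectors of `m b`. Both lie in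
the algebra generated by `b` and their sum, on which `m (m b (a - c))` is nilpotent by
supersolvability. -/
theorem exists_pow_mul_mem (hsec : IsStableSection m S M U W) (hm : IsLeibniz m)
    (h2 : IsTwoGenSupersolvable m S) {a b v : L} {α β : F} (ha : a ∈ M) (hb : b ∈ M) (hv : v ∈ W)
    (hαβ : α ≠ β) (hab : m b a - α • a ∈ scalarActors m M U W)
    (hvb : m b v - β • v ∈ U) :
    ∃ n : ℕ, ((m (m b a) : End F L) ^ n) v ∈ U := by
  have hKS : scalarActors m M U W ≤ S := fun x hx ↦ hsec.subalg_le hx.1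
  have hUS : U ≤ S := hsec.bot_le_top.trans hsec.top_le
  have := Submodule.finiteDimensional_of_le hKS
  have := Submodule.finiteDimensional_of_le hUS
  obtain ⟨c, hc, hca⟩ := exists_sub_mem_maxGenEigenspace
    (fun x hx ↦ hsec.mul_mem_scalarActors hm hb hx) hab
  obtain ⟨u, hu, huv⟩ := exists_sub_mem_maxGenEigenspace (hsec.mul_mem_bot b hb) hvb
  obtain ⟨hac, hvu⟩ := mem_genBy_of_mem_maxGenEigenspace hαβ hca huv
  have hsum : (a - c) + (v - u) ∈ S := add_mem (sub_mem (hsec.subalg_le ha) (hKS hc))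
    (sub_mem (hsec.top_le hv) (hUS hu))
  obtain ⟨n, hn⟩ := (h2 b (hsec.subalg_le hb) _ hsum).idealChain.exists_pow_mul_mul_mem hm
    (subset_genBy _ (Set.mem_insert b _)) hac
  have hbaU : ∀ x ∈ U, m (m b a) x ∈ U := hsec.mul_mem_bot _ (hsec.isSubalg b hb a ha)
  have hbac : m b (a - c) ∈ M := hsec.isSubalg b hb _ (sub_mem ha hc.1)
  have hpow := pow_sub_pow_apply_mem (f := m (m b a)) (g := m (m b (a - c))) hbaU
    (hsec.mul_mem_top _ hbac) (n := n) (w := v - u) (fun w hw ↦ by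
      rw [← LinearMap.sub_apply, ← map_sub, ← map_sub, sub_sub_cancel]
      exact actsAsScalar_zero.1 (hsec.actsAsScalar_mul_left hm hb hc) w hw)
    (sub_mem hv (hsec.bot_le_top hu))
  rw [(Submodule.mem_bot F).1 (hn _ hvu), sub_zero, map_sub] at hpow
  exact ⟨n, (U.sub_mem_iff_left (Module.End.pow_apply_mem_of_forall_mem n hbaU u hu)).1 hpow⟩

theorem actsAsScalar_mul_of_mem (hsec : IsStableSection m S M U W) (hm : IsLeibniz m)
    (h2 : IsTwoGenSupersolvable m S) (hWU : ¬W ≤ U) {q d : L} (hq : q ∈ M) (hd : d ∈ M)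
    (hqd : m q d ∈ scalarActors m M U W) :
    ActsAsScalar m U W (m q d) 0 := by
  obtain ⟨hp, s, hs⟩ := hqd
  rcases eq_or_ne s 0 with rfl | hs0
  · exact hs
  exfalso
  obtain ⟨v, hv, hvU, ν, hdv⟩ := h2.exists_eigenvector hsec.top_le hWU (hsec.subalg_le hd)
    (hsec.mul_mem_top d hd)
  set p := m q d
  set b := d + ((1 - ν) / s) • p
  have hb : b ∈ M := add_mem hd (M.smul_mem _ hp)
  have hbv : m b v - (1 : F) • v ∈ U := by
    have h : m b v - (1 : F) • v = (m d v - ν • v) + ((1 - ν) / s) • (m p v - s • v) := by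
      simp only [b, map_add, map_smul, LinearMap.add_apply, LinearMap.smul_apply]
      match_scalars <;> field_simp
      ring
    exact h ▸ add_mem hdv (U.smul_mem _ (hs v hv))
  have hbq : ActsAsScalar m U W (m b q) (-s) := by
    have h := (hs.swap hm).add ((hs.mul_right hm (hsec.mul_mem_bot q hq)
      (hsec.mul_mem_top q hq)).smul ((1 - ν) / s))
    simpa only [b, map_add, map_smul, LinearMap.add_apply, LinearMap.smul_apply, mul_zero,
      add_zero] using h
  have hbqM : m b q ∈ M := hsec.isSubalg b hb q hq
  obtain ⟨n, hn⟩ := hsec.exists_pow_mul_mem hm h2 hq hb hv zero_ne_one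
    (by simpa using ⟨hbqM, -s, hbq⟩) hbv
  exact hvU (hsec.mem_of_pow_mem_of_actsAsScalar hbqM hbq (neg_ne_zero.2 hs0) hv hn)

theorem not_injective_mod (hsec : IsStableSection m S M U W) (hm : IsLeibniz m)
    (h2 : IsTwoGenSupersolvable m S) (hWU : ¬W ≤ U) {q e : L} (hq : q ∈ M) (he : e ∈ M)
    (hqe : ActsAsScalar m U W (m q e - e) 0) : ¬∀ w ∈ W, m e w ∈ U → w ∈ U := by
  intro hinj
  obtain ⟨w, hw, hwU, ν, hν, hqw⟩ := hsec.exists_eigenvector_ne_one hm h2 hWU hq he hqe hinj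
  have hqeM : m q e ∈ M := hsec.isSubalg q hq e he
  obtain ⟨n, hn⟩ := hsec.exists_pow_mul_mem hm h2 he hq hw (Ne.symm hν)
    (by simpa using ⟨sub_mem hqeM he, 0, hqe⟩) hqw
  have hpow := pow_sub_pow_apply_mem (f := m (m q e)) (g := m e) (hsec.mul_mem_bot _ hqeM)
    (hsec.mul_mem_top e he) (by simpa using actsAsScalar_zero.1 hqe) n hw
  have hinj_pow (k : ℕ) : ((m e : End F L) ^ k) w ∈ U → w ∈ U := by
    induction k with
    | zero => exact id
    | succ k ih =>
      intro hk
      rw [pow_succ', Module.End.mul_apply] at hk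
      exact ih (hinj _ (Module.End.pow_apply_mem_of_forall_mem k (hsec.mul_mem_top e he) w hw) hk)
  exact hwU (hinj_pow n ((U.sub_mem_iff_right hn).1 hpow))

end IsStableSection

variable (m) in
/-- The action of `M` on the section `W / U` is irreducible. -/
def IsIrreducibleSection (S M U W : Submodule F L) : Prop :=
  Minimal (fun X ↦ IsStableSection m S M U X ∧ ¬X ≤ U) W

namespace IsIrreducibleSection

theorem isStableSection (hirr : IsIrreducibleSection m S M U W) : IsStableSection m S M U W :=
  hirr.prop.1

theorem not_le (hirr : IsIrreducibleSection m S M U W) : ¬W ≤ U :=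
  hirr.prop.2

/-- Schur's lemma: by `hstable`, the `ν`-eigenspace of `e` on `W / U` is stable under `M`. -/
theorem injective_mod_or_actsAsScalar (hirr : IsIrreducibleSection m S M U W) (hm : IsLeibniz m)
    {e : L} (he : e ∈ M) (ν : F)
    (hstable : ∀ q ∈ M, ∀ w ∈ W, m e w - ν • w ∈ U → m (m q e) w ∈ U) :
    (∀ w ∈ W, m e w - ν • w ∈ U → w ∈ U) ∨ ActsAsScalar m U W e ν := by
  have hsec := hirr.isStableSection
  set X : Submodule F L := W ⊓ U.comap (m e - ν • LinearMap.id)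
  have hX : ∀ w, w ∈ X ↔ w ∈ W ∧ m e w - ν • w ∈ U := fun w ↦ Iff.rfl
  have hXsec : IsStableSection m S M U X :=
    { hsec with
      bot_le_top := fun u hu ↦ (hX u).2
        ⟨hsec.bot_le_top hu, sub_mem (hsec.mul_mem_bot e he u hu) (U.smul_mem ν hu)⟩
      top_le := inf_le_left.trans hsec.top_le
      mul_mem_top := by
        intro q hq w hw
        have h : m e (m q w) - ν • m q w = m q (m e w - ν • w) - m (m q e) w := by
          rw [hm.mul_mul, map_sub, map_smul]
          abel
        exact (hX _).2 ⟨hsec.mul_mem_top q hq w hw.1, h ▸ sub_mem (hsec.mul_mem_bot q hq _ hw.2)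
          (hstable q hq w hw.1 hw.2)⟩ }
  refine or_iff_not_imp_right.2 fun hscalar w hw hwν ↦ ?_
  by_contra hwU
  exact hscalar fun x hx ↦ (hirr.le_of_le ⟨hXsec, fun h ↦ hwU (h ⟨hw, hwν⟩)⟩ inf_le_left hx).2

variable [FiniteDimensional F S]

theorem mem_scalarActors_of_forall_mul_mem (hirr : IsIrreducibleSection m S M U W)
    (hm : IsLeibniz m) (h2 : IsTwoGenSupersolvable m S) {d : L} (hd : d ∈ M)
    (h : ∀ q ∈ M, m q d ∈ scalarActors m M U W) : d ∈ scalarActors m M U W := by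
  have hsec := hirr.isStableSection
  obtain ⟨v, hv, hvU, ν, hdv⟩ := h2.exists_eigenvector hsec.top_le hirr.not_le (hsec.subalg_le hd)
    (hsec.mul_mem_top d hd)
  have hzero : ∀ q ∈ M, ∀ w ∈ W, m (m q d) w ∈ U := fun q hq ↦
    actsAsScalar_zero.1 (hsec.actsAsScalar_mul_of_mem hm h2 hirr.not_le hq hd (h q hq))
  exact ⟨hd, ν, (hirr.injective_mod_or_actsAsScalar hm hd ν fun q hq w hw _ ↦
    hzero q hq w hw).resolve_left fun hinj ↦ hvU (hinj v hv hdv)⟩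

theorem mem_scalarActors_of_mul_sub (hirr : IsIrreducibleSection m S M U W) (hm : IsLeibniz m)
    (h2 : IsTwoGenSupersolvable m S) {q e : L} (hq : q ∈ M) (he : e ∈ M)
    (hqe : ActsAsScalar m U W (m q e - e) 0)
    (h : ∀ p ∈ M, ∃ t : F, m p e - t • e ∈ scalarActors m M U W) :
    e ∈ scalarActors m M U W := by
  have hsec := hirr.isStableSection
  have hqeK : m q e - e ∈ scalarActors m M U W := ⟨sub_mem (hsec.isSubalg q hq e he) he, 0, hqe⟩
  have hstable : ∀ p ∈ M, ∀ w ∈ W, m e w - (0 : F) • w ∈ U → m (m p e) w ∈ U := by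
    intro p hp w hw hew
    obtain ⟨t, ht⟩ := h p hp
    set r := p - t • q
    have hr : r ∈ M := sub_mem hp (M.smul_mem t hq)
    have hre : m r e = (m p e - t • e) - t • (m q e - e) := by
      simp only [r, map_sub, map_smul, LinearMap.sub_apply, LinearMap.smul_apply]
      module
    have hreK : m r e ∈ scalarActors m M U W := hre ▸ sub_mem ht (Submodule.smul_mem _ t hqeK)
    have hpe : m (m p e) w = m (m r e) w + t • (m (m q e - e) w + m e w) := by
      simp only [r, map_sub, map_smul, LinearMap.sub_apply, LinearMap.smul_apply]
      module
    rw [zero_smul, sub_zero] at hew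
    exact hpe ▸ add_mem
      (actsAsScalar_zero.1 (hsec.actsAsScalar_mul_of_mem hm h2 hirr.not_le hr he hreK) w hw)
      (U.smul_mem t (add_mem (actsAsScalar_zero.1 hqe w hw) hew))
  exact ⟨he, 0, (hirr.injective_mod_or_actsAsScalar hm he 0 hstable).resolve_left fun hinj ↦
    hsec.not_injective_mod hm h2 hirr.not_le hq he hqe (by simpa using hinj)⟩

theorem mem_scalarActors_of_forall_exists (hirr : IsIrreducibleSection m S M U W)
    (hm : IsLeibniz m) (h2 : IsTwoGenSupersolvable m S) {d : L} (hd : d ∈ M)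
    (h : ∀ q ∈ M, ∃ t : F, m q d - t • d ∈ scalarActors m M U W) :
    d ∈ scalarActors m M U W := by
  have hsec := hirr.isStableSection
  set K := scalarActors m M U W
  by_cases hK : ∀ q ∈ M, m q d ∈ K
  · exact hirr.mem_scalarActors_of_forall_mul_mem hm h2 hd hK
  push Not at hK
  obtain ⟨q, hq, hqd⟩ := hK
  obtain ⟨s, hs⟩ := h q hq
  have hs0 : s ≠ 0 := fun hs0 ↦ hqd (by simpa [hs0] using hs)
  have hq' : s⁻¹ • q ∈ M := M.smul_mem _ hq
  -- Since `e ≡ d` modulo `K` and products `m p k` with `k ∈ K` act as zero on `W / U`, so does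
  -- `m (s⁻¹ • q) e - e`.
  set e := m (s⁻¹ • q) d
  have hed : e - d ∈ K := by
    have h' : e - d = s⁻¹ • (m q d - s • d) := by
      simp [e, smul_sub, smul_smul, hs0]
    exact h' ▸ K.smul_mem _ hs
  have hqe : ActsAsScalar m U W (m (s⁻¹ • q) e - e) 0 := by
    rw [← map_sub]
    exact hsec.actsAsScalar_mul_left hm hq' hed
  have he : e ∈ K := by
    refine hirr.mem_scalarActors_of_mul_sub hm h2 hq' (hsec.isSubalg _ hq' d hd) hqe fun p hp ↦ ?_
    obtain ⟨t, ht⟩ := h p hp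
    have hpe : m p e - t • e = m p (e - d) + ((m p d - t • d) - t • (e - d)) := by
      rw [map_sub]
      module
    exact ⟨t, hpe ▸ add_mem (hsec.mul_mem_scalarActors hm hp hed)
      (sub_mem ht (K.smul_mem t hed))⟩
  exact (K.sub_mem_iff_right he).1 hed

theorem le_scalarActors (hirr : IsIrreducibleSection m S M U W) (hm : IsLeibniz m)
    (h2 : IsTwoGenSupersolvable m S) (hA : ∀ a ∈ A, ∀ w ∈ W, m a w ∈ U)
    (h : IdealChain m M A J) : J ≤ scalarActors m M U W := by
  induction h with
  | refl hAM => exact fun a ha ↦ ⟨hAM.1 ha, 0, actsAsScalar_zero.2 (hA a ha)⟩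
  | @adjoin I d hI hId ih =>
    refine sup_le ih ((span_singleton_le_iff_mem d _).2 ?_)
    have hd : d ∈ I ⊔ F ∙ d := mem_sup_right (mem_span_singleton_self d)
    refine hirr.mem_scalarActors_of_forall_exists hm h2 (hId.1 hd) fun q hq ↦ ?_
    obtain ⟨t, ht⟩ := hI.isIdealOf.exists_actsAsScalar hId hq
    exact ⟨t, ih (ht d hd)⟩

end IsIrreducibleSection

theorem IsStableSection.exists_common_eigenvector [FiniteDimensional F S]
    (hsec : IsStableSection m S M U W) (hm : IsLeibniz m) (h2 : IsTwoGenSupersolvable m S)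
    (hWU : ¬W ≤ U) (hA : ∀ a ∈ A, ∀ w ∈ W, m a w ∈ U)
    (h : IdealChain m M A M) : ∃ w ∈ W, w ∉ U ∧ ∀ x ∈ M, m x w ∈ U ⊔ F ∙ w := by
  have := Submodule.finiteDimensional_of_le hsec.top_le
  obtain ⟨X, hXW, hirr⟩ := exists_minimal_le_of_isArtinian
    (P := fun X ↦ IsStableSection m S M U X ∧ ¬X ≤ U) ⟨hsec, hWU⟩
  obtain ⟨w, hw, hwU⟩ := SetLike.not_le_iff_exists.1 hirr.prop.2
  refine ⟨w, hXW hw, hwU, fun x hx ↦ ?_⟩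
  obtain ⟨-, ν, hν⟩ := IsIrreducibleSection.le_scalarActors hirr hm h2
    (fun a ha y hy ↦ hA a ha y (hXW hy)) h hx
  exact mem_sup_span_singleton_iff.2 ⟨_, hν w hw, ν, sub_add_cancel _ _⟩

end Sections

section ChiefFactors

variable {F L : Type*} [Field F] [AddCommGroup L] [Module F L] {m : L →ₗ[F] L →ₗ[F] L}
  {S M A B X : Submodule F L}

theorem exists_stable_between (hm : IsLeibniz m) {I Z : Submodule F L} [FiniteDimensional F Z]
    (hIZ : I ≤ Z) {w : L} (hI : ∀ x ∈ M, ∀ y ∈ I, m x y ∈ I) (hZ : ∀ y ∈ Z, m w y ∈ Z)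
    (hMw : ∀ x ∈ M, m x w ∈ M ⊔ F ∙ w) :
    ∃ X, I ≤ X ∧ X ≤ Z ∧ ∀ x ∈ M ⊔ F ∙ w, ∀ y ∈ X, m x y ∈ X := by
  obtain ⟨X, hXZ, hX⟩ := exists_minimal_le_of_isArtinian
    (P := fun X ↦ I ≤ X ∧ ∀ y ∈ X, m w y ∈ X) ⟨hIZ, hZ⟩
  obtain ⟨hIX, hwX⟩ := hX.prop
  set Y : Submodule F L := X ⊓ ⨅ x : M, X.comap (m x)
  have hY : ∀ y, y ∈ Y ↔ y ∈ X ∧ ∀ x ∈ M, m x y ∈ X := by simp [Y]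
  have hIY : I ≤ Y := fun y hy ↦ (hY y).2 ⟨hIX hy, fun x hx ↦ hIX (hI x hx y hy)⟩
  have hwY : ∀ y ∈ Y, m w y ∈ Y := by
    intro y hy
    obtain ⟨hyX, hMy⟩ := (hY y).1 hy
    refine (hY _).2 ⟨hwX y hyX, fun x hx ↦ ?_⟩
    obtain ⟨a, ha, t, hat⟩ := mem_sup_span_singleton_iff.1 (hMw x hx)
    rw [hm, ← hat, map_add, map_smul, LinearMap.add_apply, LinearMap.smul_apply]
    exact add_mem (add_mem (hMy a ha) (X.smul_mem t (hwX y hyX))) (hwX _ (hMy x hx))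
  have hXY : X ≤ Y := hX.le_of_le ⟨hIY, hwY⟩ inf_le_left
  refine ⟨X, hIX, hXZ, fun x hx y hy ↦ ?_⟩
  obtain ⟨a, ha, t, rfl⟩ := mem_sup_span_singleton_iff.1 hx
  rw [map_add, map_smul, LinearMap.add_apply, LinearMap.smul_apply]
  exact add_mem (((hY y).1 (hXY hy)).2 a ha) (X.smul_mem t (hwX y hy))

variable (m) in
/-- The elements of `B` whose left multiplication maps `S` into `A`. -/
def leftAnnihilatorMod (S A B : Submodule F L) : Submodule F L where
  carrier := {z | z ∈ B ∧ ∀ y ∈ S, m z y ∈ A}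
  zero_mem' := ⟨B.zero_mem, by simp⟩
  add_mem' := fun ⟨hx, hxA⟩ ⟨hy, hyA⟩ ↦ ⟨add_mem hx hy, fun s hs ↦ by
    rw [map_add, LinearMap.add_apply]; exact add_mem (hxA s hs) (hyA s hs)⟩
  smul_mem' := fun t _ ⟨hx, hxA⟩ ↦ ⟨B.smul_mem t hx, fun s hs ↦ by
    rw [map_smul, LinearMap.smul_apply]; exact A.smul_mem t (hxA s hs)⟩

theorem le_leftAnnihilatorMod (hA : IsIdealOf m S A) (hAB : A ≤ B) :
    A ≤ leftAnnihilatorMod m S A B :=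
  fun _ ha ↦ ⟨hAB ha, fun _ hy ↦ hA.mul_mem_right hy ha⟩

theorem isIdealOf_leftAnnihilatorMod (hm : IsLeibniz m) (hS : IsSubalg m S)
    (hA : IsIdealOf m S A) (hB : IsIdealOf m S B) (hAB : A ≤ B) :
    IsIdealOf m S (leftAnnihilatorMod m S A B) := by
  refine ⟨fun z hz ↦ hB.1 hz.1, fun x hx z hz ↦
    ⟨⟨hB.mul_mem_left hx hz.1, fun y hy ↦ ?_⟩, le_leftAnnihilatorMod hA hAB (hz.2 x hx)⟩⟩
  rw [hm.mul_mul]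
  exact sub_mem (hA.mul_mem_left hx (hz.2 y hy)) (hz.2 _ (hS x hx y hy))

variable (m) in
/-- `B / A` is a chief factor of `S`: a minimal nonzero ideal of `S / A`. -/
structure IsChiefFactor (S A B : Submodule F L) : Prop where
  isSubalg : IsSubalg m S
  isIdealOf_bot : IsIdealOf m S A
  minimal : Minimal (fun X ↦ IsIdealOf m S X ∧ A < X) B

namespace IsChiefFactor

theorem isIdealOf_top (hB : IsChiefFactor m S A B) : IsIdealOf m S B :=
  hB.minimal.prop.1

theorem lt (hB : IsChiefFactor m S A B) : A < B :=
  hB.minimal.prop.2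

theorem eq_top (hB : IsChiefFactor m S A B) (hX : IsIdealOf m S X) (hAX : A < X) (hXB : X ≤ B) :
    X = B :=
  hB.minimal.eq_of_le ⟨hX, hAX⟩ hXB

theorem leftAnnihilatorMod_eq (hB : IsChiefFactor m S A B) (hm : IsLeibniz m) :
    leftAnnihilatorMod m S A B = A ∨ leftAnnihilatorMod m S A B = B := by
  have hA := hB.isIdealOf_bot
  refine or_iff_not_imp_left.2 fun hne ↦ hB.eq_top
    (isIdealOf_leftAnnihilatorMod hm hB.isSubalg hA hB.isIdealOf_top hB.lt.le)
    (lt_of_le_of_ne (le_leftAnnihilatorMod hA hB.lt.le) (Ne.symm hne)) fun z hz ↦ hz.1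

theorem mul_mem_of_mul_mem (hB : IsChiefFactor m S A B) (hm : IsLeibniz m) (hAX : A ≤ X)
    {x b : L} (hx : x ∈ S) (hb : b ∈ B) (hxb : m x b ∈ X) : m b x ∈ X := by
  rcases hB.leftAnnihilatorMod_eq hm with h | h
  · have hsum : m x b + m b x ∈ leftAnnihilatorMod m S A B :=
      ⟨add_mem (hB.isIdealOf_top.mul_mem_left hx hb) (hB.isIdealOf_top.mul_mem_right hx hb),
        fun y _ ↦ hm.mul_add_mul_mul x b y ▸ A.zero_mem⟩
    exact (X.add_mem_iff_right hxb).1 (hAX (h.le hsum))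
  · exact hAX ((h.ge hb).2 x hx)

theorem mul_self_mem (hB : IsChiefFactor m S A B) (hm : IsLeibniz m) {b : L} (hb : b ∈ B) :
    m b b ∈ A := by
  rcases hB.leftAnnihilatorMod_eq hm with h | h
  · refine h.le ⟨hB.isIdealOf_top.isSubalg b hb b hb, fun y _ ↦ ?_⟩
    rw [hm.mul_mul, sub_self]
    exact A.zero_mem
  · exact (h.ge hb).2 b (hB.isIdealOf_top.1 hb)

theorem isIdealOf_of_mul_mem_left (hB : IsChiefFactor m S A B) (hm : IsLeibniz m) (hAX : A ≤ X)
    (hXB : X ≤ B) (hX : ∀ x ∈ S, ∀ y ∈ X, m x y ∈ X) : IsIdealOf m S X :=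
  ⟨hXB.trans hB.isIdealOf_top.1, fun x hx y hy ↦
    ⟨hX x hx y hy, hB.mul_mem_of_mul_mem hm hAX hx (hXB hy) (hX x hx y hy)⟩⟩

theorem exists_isIdealOf_sup_span_singleton [FiniteDimensional F S] (hB : IsChiefFactor m S A B)
    (hm : IsLeibniz m) (h2 : IsTwoGenSupersolvable m S) (hBA : ∀ b ∈ B, ∀ c ∈ B, m b c ∈ A)
    (hS : IdealChain m S B S) : ∃ w ∉ A, IsIdealOf m S (A ⊔ F ∙ w) := by
  have hsec : IsStableSection m S S A B :=
    { isSubalg := hB.isSubalg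
      subalg_le := le_rfl
      bot_le_top := hB.lt.le
      top_le := hB.isIdealOf_top.1
      mul_mem_bot := fun _ hx _ ↦ hB.isIdealOf_bot.mul_mem_left hx
      mul_mem_top := fun _ hx _ ↦ hB.isIdealOf_top.mul_mem_left hx }
  obtain ⟨w, hw, hwA, hSw⟩ := hsec.exists_common_eigenvector hm h2 hB.lt.not_ge hBA hS
  refine ⟨w, hwA, hB.isIdealOf_of_mul_mem_left hm le_sup_left
    (sup_le hB.lt.le ((span_singleton_le_iff_mem w B).2 hw)) fun x hx y hy ↦ ?_⟩
  obtain ⟨a, ha, t, rfl⟩ := mem_sup_span_singleton_iff.1 hy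
  rw [map_add, map_smul]
  exact add_mem (mem_sup_left (hB.isIdealOf_bot.mul_mem_left hx ha))
    (Submodule.smul_mem _ t (hSw x hx))

theorem le_mprod_sup (hB : IsChiefFactor m S A B) (hm : IsLeibniz m)
    (hBA : ¬∀ b ∈ B, ∀ c ∈ B, m b c ∈ A) : B ≤ mprod m B B ⊔ A := by
  have hA := hB.isIdealOf_bot
  refine (hB.eq_top (hB.isIdealOf_top.mprod_sup hm hA) (lt_of_le_of_ne le_sup_right fun h ↦ hBA ?_)
    (sup_le (Submodule.map₂_le.2 hB.isIdealOf_top.isSubalg) hB.lt.le)).ge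
  exact fun b hb c hc ↦ h.ge (mem_sup_left (Submodule.apply_mem_map₂ m hb hc))

theorem isSubalg_sup_span_singleton (hS : IsChiefFactor m S A S) (hm : IsLeibniz m)
    (hM : IsSubalg m M) (hMS : M ≤ S) (hAM : A ≤ M) {w : L} (hw : w ∈ S)
    (hMw : ∀ x ∈ M, m x w ∈ M ⊔ F ∙ w) : IsSubalg m (M ⊔ F ∙ w) := by
  intro x hx y hy
  obtain ⟨a, ha, s, rfl⟩ := mem_sup_span_singleton_iff.1 hx
  obtain ⟨b, hb, t, rfl⟩ := mem_sup_span_singleton_iff.1 hy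
  have hwb : m w b ∈ M ⊔ F ∙ w :=
    hS.mul_mem_of_mul_mem hm (hAM.trans le_sup_left) (hMS hb) hw (hMw b hb)
  have hww : m w w ∈ M ⊔ F ∙ w := mem_sup_left (hAM (hS.mul_self_mem hm hw))
  simp only [map_add, map_smul, LinearMap.add_apply, LinearMap.smul_apply]
  exact add_mem (add_mem (mem_sup_left (hM a ha b hb)) (Submodule.smul_mem _ s hwb))
    (Submodule.smul_mem _ t (add_mem (hMw a ha) (Submodule.smul_mem _ s hww)))

theorem genBy_sup_eq [FiniteDimensional F S] (hS : IsChiefFactor m S A S) (hm : IsLeibniz m)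
    {w z : L} (hw : w ∈ S) (hz : z ∈ S) (hzA : z ∉ A) (hMw : ∀ x ∈ M, m x w ∈ M ⊔ F ∙ w)
    (hMwS : M ⊔ F ∙ w = S) (hMz : ∀ x ∈ M, ∀ y ∈ A ⊔ F ∙ z, m x y ∈ A ⊔ F ∙ z) :
    genBy m {w, z} ⊔ A = S := by
  have hA := hS.isIdealOf_bot
  have hwz : {w, z} ⊆ (genBy m {w, z} : Set L) := subset_genBy _
  have hle : genBy m {w, z} ⊔ A ≤ S :=
    sup_le (genBy_le hS.isSubalg (Set.pair_subset hw hz)) hA.1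
  have hAz : A ⊔ F ∙ z ≤ genBy m {w, z} ⊔ A :=
    sup_le le_sup_right ((span_singleton_le_iff_mem z _).2 (mem_sup_left (hwz (by simp))))
  have hstable : ∀ y ∈ genBy m {w, z} ⊔ A, m w y ∈ genBy m {w, z} ⊔ A := by
    intro y hy
    obtain ⟨t, ht, a, ha, rfl⟩ := Submodule.mem_sup.1 hy
    rw [map_add]
    exact Submodule.add_mem_sup (isSubalg_genBy _ w (hwz (by simp)) t ht) (hA.mul_mem_left hw ha)
  have := Submodule.finiteDimensional_of_le hle
  obtain ⟨X, hAzX, hXle, hX⟩ := exists_stable_between hm hAz hMz hstable hMw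
  have hAX : A < X := lt_of_lt_of_le (by simpa using hzA) hAzX
  rw [hMwS] at hX
  have hXS := hS.eq_top (hS.isIdealOf_of_mul_mem_left hm hAX.le (hXle.trans hle) hX) hAX
    (hXle.trans hle)
  exact hle.antisymm (hXS.ge.trans hXle)

/-- If `A < M`, a common eigenvector `w` of `M` modulo `M` and a common eigenvector `z` of `M`
modulo `A` generate `S` modulo `A`. -/
theorem idealChain_of_maximal_subalg [FiniteDimensional F S] (hS : IsChiefFactor m S A S)
    (hm : IsLeibniz m) (h2 : IsTwoGenSupersolvable m S) (hAM : A ≤ M)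
    (hM : Maximal (fun T ↦ IsSubalg m T ∧ T < S) M) (hchain : IdealChain m M A M) :
    IdealChain m S A S := by
  have hA := hS.isIdealOf_bot
  obtain ⟨hMsub, hMS⟩ := hM.prop
  have hsec : IsStableSection m S M M S :=
    { isSubalg := hMsub
      subalg_le := hMS.le
      bot_le_top := hMS.le
      top_le := le_rfl
      mul_mem_bot := hMsub
      mul_mem_top := fun x hx ↦ hS.isSubalg x (hMS.le hx) }
  obtain ⟨w, hw, hwM, hMw⟩ := hsec.exists_common_eigenvector hm h2 hMS.not_ge
    (fun a ha y hy ↦ hAM (hA.mul_mem_right hy ha)) hchain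
  have hMwS : M ⊔ F ∙ w = S := by
    by_contra hne
    have hle := hM.le_of_ge ⟨hS.isSubalg_sup_span_singleton hm hMsub hMS.le hAM hw hMw,
      lt_of_le_of_ne (sup_le hMS.le ((span_singleton_le_iff_mem w S).2 hw)) hne⟩ le_sup_left
    exact hwM (hle (mem_sup_right (mem_span_singleton_self w)))
  rcases eq_or_ne M A with rfl | hne
  · have h := (IdealChain.refl hA).adjoin w (hMwS.symm ▸ isIdealOf_self hS.isSubalg)
    rwa [hMwS] at h
  obtain ⟨z, hz, hzA, hAz⟩ := hchain.exists_adjoin_of_ne hne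
  have hgen : genBy m {w, z} ⊔ A = S := hS.genBy_sup_eq hm hw (hMS.le hz) hzA hMw hMwS
    fun x hx y ↦ hAz.mul_mem_left hx
  have h := IdealChain.sup_of_sup (hgen.symm ▸ hA) (h2 w hw z (hMS.le hz)).idealChain
  rwa [hgen] at h

theorem idealChain [FiniteDimensional F S] (hB : IsChiefFactor m S A B) (hm : IsLeibniz m)
    (h2 : IsTwoGenSupersolvable m S)
    (hquot : ∀ X, IsIdealOf m S X → A < X → IdealChain m S X S)
    (hsub : ∀ T, IsSubalg m T → A ≤ T → T < S → IdealChain m T A T) : IdealChain m S A S := by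
  have hA := hB.isIdealOf_bot
  by_cases hBA : ∀ b ∈ B, ∀ c ∈ B, m b c ∈ A
  · obtain ⟨w, hwA, hw⟩ := hB.exists_isIdealOf_sup_span_singleton hm h2 hBA
      (hquot B hB.isIdealOf_top hB.lt)
    exact ((IdealChain.refl hA).adjoin w hw).trans (hquot _ hw (by simpa using hwA))
  have hBS : B = S := by
    by_contra hne
    have hchain := hsub B hB.isIdealOf_top.isSubalg hB.lt.le
      (lt_of_le_of_ne hB.isIdealOf_top.1 hne)
    exact hB.lt.not_ge (hchain.le_of_le_mprod_sup hm (hA.mono hB.lt.le hB.isIdealOf_top.1)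
      (hB.le_mprod_sup hm hBA) le_rfl)
  subst hBS
  obtain ⟨M, hAM, hM⟩ := exists_maximal_ge_of_isNoetherian (W := B)
    (P := fun T ↦ IsSubalg m T ∧ T < B) (fun T hT ↦ hT.2.le) ⟨hA.isSubalg, hB.lt⟩
  exact hB.idealChain_of_maximal_subalg hm h2 hAM hM (hsub M hM.prop.1 hAM hM.prop.2)

end IsChiefFactor

theorem IsIdealOf.exists_isChiefFactor [FiniteDimensional F S] (hS : IsSubalg m S)
    (hA : IsIdealOf m S A) (hAS : A ≠ S) : ∃ B, IsChiefFactor m S A B := by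
  obtain ⟨B, -, hB⟩ := exists_minimal_le_of_isArtinian (W := S)
    (P := fun X ↦ IsIdealOf m S X ∧ A < X) ⟨isIdealOf_self hS, lt_of_le_of_ne hA.1 hAS⟩
  exact ⟨B, hS, hA, hB⟩

theorem IsTwoGenSupersolvable.idealChain [FiniteDimensional F S] (h2 : IsTwoGenSupersolvable m S)
    (hm : IsLeibniz m) (hS : IsSubalg m S) (hA : IsIdealOf m S A) : IdealChain m S A S := by
  induction hn : finrank F S - finrank F A using Nat.strong_induction_on generalizing S A with
  | _ n ih =>
    rcases eq_or_ne A S with rfl | hAS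
    · exact .refl hA
    obtain ⟨B, hB⟩ := hA.exists_isChiefFactor hS hAS
    refine hB.idealChain hm h2 (fun X hX hAX ↦ ?_) fun T hT hAT hTS ↦ ?_
    · have := Submodule.finiteDimensional_of_le hX.1
      have := Submodule.finrank_mono hX.1
      have := Submodule.finrank_lt_finrank_of_lt hAX
      exact ih _ (by lia) h2 hS hX rfl
    · have := Submodule.finiteDimensional_of_le hTS.le
      have := Submodule.finrank_mono hAT
      have := Submodule.finrank_lt_finrank_of_lt hTS
      exact ih _ (by lia) (h2.mono hTS.le) hT (hA.mono hAT hTS.le) rfl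

end ChiefFactors

theorem minimally_non_supersolvable_of_two_generated_supersolvable_general
    {F : Type*} [Field F] {L : Type*} [AddCommGroup L] [Module F L]
    (m : L →ₗ[F] L →ₗ[F] L) (hm : IsLeibniz m)
    (h2gen : ∀ T : Submodule F L, IsSubalg m T → T ≠ ⊤ → TwoGenerated m T → IsSupersolvable m T)
    {S : Submodule F L} [FiniteDimensional F S] (hS : IsSubalg m S) (hSt : S ≠ ⊤) :
    IsSupersolvable m S := by
  have h2 : IsTwoGenSupersolvable m S := fun x hx y hy ↦
    have hle : genBy m {x, y} ≤ S := genBy_le hS (Set.pair_subset hx hy)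
    h2gen _ (isSubalg_genBy _) (ne_top_of_le_ne_top hSt hle) ⟨x, y, rfl⟩
  exact (h2.idealChain hm hS isIdealOf_bot).isSupersolvable

/-- Let `L` be a finite-dimensional Leibniz algebra such that every
two-generated proper subalgebra of `L` is supersolvable, `L` itself is not
supersolvable, and `φ(L) = 0`. Then every proper subalgebra of `L` is supersolvable,
i.e. `L` is minimally non-supersolvable. -/
theorem minimally_non_supersolvable_of_two_generated_supersolvable
    {F : Type*} [Field F] {L : Type*} [AddCommGroup L] [Module F L]
    [FiniteDimensional F L]
    (m : L →ₗ[F] L →ₗ[F] L) (hm : IsLeibniz m)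
    (h2gen : ∀ S : Submodule F L, IsSubalg m S → S ≠ ⊤ → TwoGenerated m S →
      IsSupersolvable m S)
    (hnotsuper : ¬ IsSupersolvable m (⊤ : Submodule F L))
    (hphi : frattiniIdeal m = ⊥) :
    ∀ S : Submodule F L, IsSubalg m S → S ≠ ⊤ → IsSupersolvable m S :=
  fun _ hS hSt ↦
    minimally_non_supersolvable_of_two_generated_supersolvable_general m hm h2gen hS hSt
end

section
/- Let M be a finite-dimensional Leibniz algebra over a field F and let S be a subalgebra of M. Then S is triangulable on M if and only if S² = S·S is contained in nil(S), the largest ideal of S that is nil on M. -/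
/-!
Basic theory of (left) Leibniz algebras, formalized over an arbitrary field `F`.
A Leibniz algebra structure on an `F`-vector space `L` is given by a bilinear
multiplication `m : L →ₗ[F] L →ₗ[F] L` satisfying the left Leibniz identity.
-/

open Submodule Module

/-!
Commutators of upper triangular matrices are strictly upper triangular, hence nilpotent, which is
the forward implication. Conversely, if the derived algebra consists of nilpotent operators, then by
Engel's theorem it acts nilpotently, and this survives extension of scalars. The last nonzero term
of the lower central series of its action is a nonzero submodule on which the operators commute; a
common eigenvector there spans an invariant line, and one inducts on the quotient. The Leibniz
identity says exactly that left multiplication turns products into commutators.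
-/

attribute [local instance] LieRing.ofAssociativeRing

section Matrices

variable {R n : Type*} [LinearOrder n] [Fintype n]

lemma mul_apply_self_of_isUpperTriangular [NonUnitalNonAssocSemiring R] {A B : Matrix n n R}
    (hA : A.IsUpperTriangular) (hB : B.IsUpperTriangular) (i : n) :
    (A * B) i i = A i i * B i i := by
  rw [Matrix.mul_apply]
  refine Finset.sum_eq_single i (fun j _ hj => ?_) (by simp)
  rcases hj.lt_or_gt with hji | hij
  · rw [hA hji, zero_mul]
  · rw [hB hij, mul_zero]

variable [CommRing R] {A B : Matrix n n R}

lemma lie_apply_self_of_isUpperTriangular (hA : A.IsUpperTriangular)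
    (hB : B.IsUpperTriangular) (i : n) : ⁅A, B⁆ i i = 0 := by
  rw [Ring.lie_def, Matrix.sub_apply, mul_apply_self_of_isUpperTriangular hA hB,
    mul_apply_self_of_isUpperTriangular hB hA, mul_comm, sub_self]

lemma isNilpotent_of_isUpperTriangular_of_apply_self_eq_zero (hA : A.IsUpperTriangular)
    (hdiag : ∀ i, A i i = 0) : IsNilpotent A := by
  have hcharpoly : A.charpoly = Polynomial.X ^ Fintype.card n := by
    simp [A.charpoly_of_isUpperTriangular hA, hdiag]
  refine ⟨Fintype.card n, ?_⟩
  simpa [hcharpoly] using A.aeval_self_charpoly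

end Matrices

section LieIdealNilpotent

variable {R L V : Type*} [CommRing R] [LieRing L] [LieAlgebra R L] [AddCommGroup V] [Module R V]
  [LieRingModule L V] [LieModule R L V] (I : LieIdeal R L)

lemma lieIdeal_isNilpotent_iff_exists_lcs_eq_bot :
    LieModule.IsNilpotent I V ↔ ∃ k, I.lcs V k = ⊥ := by
  simp only [LieModule.isNilpotent_iff R I V, ← LieSubmodule.toSubmodule_eq_bot,
    LieIdeal.coe_lcs_eq]

lemma lieIdeal_isNilpotent_iff_forall_isNilpotent_toEnd [IsNoetherian R V] :
    LieModule.IsNilpotent I V ↔ ∀ x ∈ I, IsNilpotent (LieModule.toEnd R L V x) :=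
  (LieModule.isNilpotent_iff_forall' (R := R)).trans Subtype.forall

lemma exists_lieSubmodule_ne_bot_lie_eq_bot [LieModule.IsNilpotent I V] [Nontrivial V] :
    ∃ W : LieSubmodule R L V, W ≠ ⊥ ∧ ⁅I, W⁆ = ⊥ := by
  classical
  have hlcs : ∃ k, I.lcs V k = ⊥ := (lieIdeal_isNilpotent_iff_exists_lcs_eq_bot I).1 inferInstance
  obtain ⟨k, hk⟩ : ∃ k, Nat.find hlcs = k + 1 := Nat.exists_eq_succ_of_ne_zero fun h0 =>
    top_ne_bot ((Nat.find_eq_zero hlcs).1 h0)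
  refine ⟨I.lcs V k, Nat.find_min hlcs (hk ▸ k.lt_succ_self), ?_⟩
  rw [← LieIdeal.lcs_succ, ← hk]
  exact Nat.find_spec hlcs

end LieIdealNilpotent

section BaseChange

open scoped TensorProduct

variable {R L V : Type*} [CommRing R] [LieRing L] [LieAlgebra R L] [AddCommGroup V] [Module R V]
  [LieRingModule L V] [LieModule R L V] (A : Type*) [CommRing A] [Algebra R A]

lemma lieIdeal_lcs_baseChange (I : LieIdeal R L) (k : ℕ) :
    LieIdeal.lcs (LieSubmodule.baseChange A I) (A ⊗[R] V) k = (I.lcs V k).baseChange A := by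
  induction k with
  | zero => simp
  | succ k ih => rw [LieIdeal.lcs_succ, LieIdeal.lcs_succ, ih, LieSubmodule.lie_baseChange]

lemma lieSubmodule_baseChange_eq_bot_iff [Module.FaithfullyFlat R A] (W : LieSubmodule R L V) :
    W.baseChange A = ⊥ ↔ W = ⊥ := by
  refine ⟨fun h => (LieSubmodule.eq_bot_iff W).2 fun w hw => ?_, fun h => by simp [h]⟩
  have hw0 : (1 : A) ⊗ₜ[R] w = 0 :=
    (LieSubmodule.eq_bot_iff _).1 h _ (LieSubmodule.tmul_mem_baseChange_of_mem (A := A) 1 hw)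
  exact Module.FaithfullyFlat.tensorProduct_mk_injective (B := A) V (hw0.trans (by simp))

lemma lieIdeal_isNilpotent_baseChange_iff [Module.FaithfullyFlat R A] (I : LieIdeal R L) :
    LieModule.IsNilpotent (I.baseChange A) (A ⊗[R] V) ↔ LieModule.IsNilpotent I V := by
  simp only [lieIdeal_isNilpotent_iff_exists_lcs_eq_bot, lieIdeal_lcs_baseChange,
    lieSubmodule_baseChange_eq_bot_iff]

end BaseChange

section Triangulable

section CommRing

variable (R L V : Type*) [CommRing R] [LieRing L] [LieAlgebra R L] [AddCommGroup V] [Module R V]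
  [LieRingModule L V] [LieModule R L V]

/-- A Lie module is triangulable if some finite basis makes all elements of the Lie algebra act by
upper triangular matrices. Unlike `LieModule.IsTriangularizable`, which concerns one element at a
time, the basis is common to the whole Lie algebra. -/
def IsTriangulable : Prop :=
  ∃ (n : ℕ) (b : Basis (Fin n) R V),
    ∀ x : L, (LinearMap.toMatrix b b (LieModule.toEnd R L V x)).IsUpperTriangular

variable {R L V}

lemma IsTriangulable.isNilpotent_toEnd (h : IsTriangulable R L V) {x : L}
    (hx : x ∈ LieAlgebra.derivedSeries R L 1) : IsNilpotent (LieModule.toEnd R L V x) := by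
  obtain ⟨n, b, hb⟩ := h
  rw [← LinearMap.isNilpotent_toMatrix_iff b]
  refine isNilpotent_of_isUpperTriangular_of_apply_self_eq_zero (hb x) fun i => ?_
  replace hx : x ∈ Submodule.span R {⁅y, z⁆ | (y : L) (z : L)} :=
    LieAlgebra.coe_derivedSeries_one_eq R L ▸ hx
  induction hx using Submodule.span_induction with
  | mem _ hyz =>
    obtain ⟨y, z, rfl⟩ := hyz
    rw [LieHom.map_lie, Ring.lie_def, map_sub, LinearMap.toMatrix_mul, LinearMap.toMatrix_mul]
    exact lie_apply_self_of_isUpperTriangular (hb y) (hb z) i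
  | zero => simp
  | add y z _ _ hy hz => simp [hy, hz]
  | smul c y _ hy => simp [hy]

lemma isTriangulable_of_finrank_le_one [StrongRankCondition R] [Module.Free R V]
    [Module.Finite R V] (h : finrank R V ≤ 1) : IsTriangulable R L V :=
  have : Subsingleton (Fin (finrank R V)) := Fin.subsingleton_iff_le_one.2 h
  ⟨_, finBasis R V, fun _ i j hij => absurd (Subsingleton.elim j i) hij.ne⟩

lemma IsTriangulable.of_lieSubmodule_of_quotient (W : LieSubmodule R L V)
    (hW : IsTriangulable R L W) (hQ : IsTriangulable R L (V ⧸ W)) : IsTriangulable R L V := by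
  obtain ⟨m, bW, hbW⟩ := hW
  obtain ⟨n, bQ, hbQ⟩ := hQ
  let b := bW.sumQuot bQ
  refine ⟨m + n, b.reindex finSumFinEquiv, fun x i j hij => ?_⟩
  obtain ⟨i, rfl⟩ := finSumFinEquiv.surjective i
  obtain ⟨j, rfl⟩ := finSumFinEquiv.surjective j
  suffices b.repr ⁅x, b j⁆ i = 0 by simpa [LinearMap.toMatrix_apply] using this
  rcases i with i | i <;> rcases j with j | j
  · have hbij : bW.repr ⁅x, bW j⁆ i = 0 := by
      simpa [LinearMap.toMatrix_apply] using hbW x ((Fin.strictMono_castAdd n).lt_iff_lt.1 hij)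
    rwa [Basis.sumQuot_inl, Basis.sumQuot_repr_inl_of_mem _ _ _ (W.lie_mem (bW j).2)]
  · exact absurd hij (i.isLt.trans_le (Nat.le_add_right m j)).not_gt
  · rw [Basis.sumQuot_inl]
    exact Basis.sumQuot_repr_inr_of_mem _ _ _ (W.lie_mem (bW j).2) i
  · have hbij : bQ.repr ⁅x, bQ j⁆ i = 0 := by
      simpa [LinearMap.toMatrix_apply] using hbQ x ((Fin.natAdd_lt_natAdd_iff m).1 hij)
    rw [← bW.sumQuot_inr bQ j] at hbij
    rwa [Basis.sumQuot_repr_inr]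

open scoped TensorProduct in
lemma isTriangulable_baseChange_iff (A : Type*) [CommRing A] [Algebra R A] :
    IsTriangulable A (A ⊗[R] L) (A ⊗[R] V) ↔ ∃ (n : ℕ) (b : Basis (Fin n) A (A ⊗[R] V)),
      ∀ x : L, (LinearMap.toMatrix b b
        ((LieModule.toEnd R L V x).baseChange A)).IsUpperTriangular := by
  refine exists_congr fun n => exists_congr fun b => ⟨fun h x => ?_, fun h x => ?_⟩
  · rw [← LieModule.toEnd_baseChange]
    exact h _
  · induction x using TensorProduct.induction_on with
    | zero => simp
    | tmul a x =>
      rw [← mul_one a, ← smul_eq_mul, ← TensorProduct.smul_tmul', map_smul, map_smul,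
        LieModule.toEnd_baseChange]
      exact fun i j hij => by simp [h x hij]
    | add x y hx hy => simpa using hx.add hy

end CommRing

section IsAlgClosed

variable {K L V : Type*} [Field K] [IsAlgClosed K] [LieRing L] [LieAlgebra K L] [AddCommGroup V]
  [Module K V] [FiniteDimensional K V] [LieRingModule L V] [LieModule K L V]

lemma exists_lie_eq_smul_of_lie_lie_eq_zero [Nontrivial V]
    (hV : ∀ (x y : L) (v : V), ⁅⁅x, y⁆, v⁆ = 0) :
    ∃ (χ : L → K) (v : V), v ≠ 0 ∧ ∀ x : L, ⁅x, v⁆ = χ x • v := by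
  let A := (LieModule.toEnd K L V).range
  have : IsLieAbelian A := by
    refine ⟨?_⟩
    rintro ⟨_, x, rfl⟩ ⟨_, y, rfl⟩
    ext v
    simpa [lie_lie] using hV x y v
  obtain ⟨χ, hχ⟩ := LieModule.exists_nontrivial_weightSpace_of_isNilpotent K A V
  obtain ⟨⟨v, hv⟩, hv0⟩ := exists_ne (0 : LieModule.weightSpace V χ)
  refine ⟨fun x => χ ⟨_, x, rfl⟩, v, by simpa using hv0, fun x => ?_⟩
  exact (LieModule.mem_weightSpace _ _).1 hv ⟨_, x, rfl⟩

lemma exists_lieSubmodule_finrank_eq_one [Nontrivial V]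
    [LieModule.IsNilpotent (LieAlgebra.derivedSeries K L 1) V] :
    ∃ W : LieSubmodule K L V, finrank K W = 1 := by
  obtain ⟨W, hW0, hW⟩ :=
    exists_lieSubmodule_ne_bot_lie_eq_bot (V := V) (LieAlgebra.derivedSeries K L 1)
  have : Nontrivial W := (LieSubmodule.nontrivial_iff_ne_bot K L V).2 hW0
  have hlie : ∀ (x y : L) (w : W), ⁅⁅x, y⁆, w⁆ = 0 := fun x y w => Subtype.ext <|
    (LieSubmodule.lie_eq_bot_iff _ _).1 hW _
      (LieSubmodule.lie_mem_lie (LieSubmodule.mem_top x) (LieSubmodule.mem_top y)) w w.2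
  obtain ⟨χ, v, hv0, hv⟩ := exists_lie_eq_smul_of_lie_lie_eq_zero (K := K) hlie
  replace hv : ∀ x : L, ⁅x, (v : V)⁆ = χ x • (v : V) := fun x => congrArg Subtype.val (hv x)
  refine ⟨⟨K ∙ (v : V), ?_⟩, finrank_span_singleton (by simpa using hv0)⟩
  intro x w hw
  obtain ⟨c, rfl⟩ := Submodule.mem_span_singleton.1 hw
  exact Submodule.mem_span_singleton.2 ⟨c * χ x, by rw [lie_smul, hv, mul_smul]⟩

theorem isTriangulable_of_isNilpotent_derivedSeries
    [LieModule.IsNilpotent (LieAlgebra.derivedSeries K L 1) V] : IsTriangulable K L V := by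
  induction hn : finrank K V using Nat.strong_induction_on generalizing V with
  | _ n ih =>
    rcases subsingleton_or_nontrivial V
    · exact isTriangulable_of_finrank_le_one (by simp [finrank_zero_of_subsingleton])
    obtain ⟨W, hW⟩ := exists_lieSubmodule_finrank_eq_one (K := K) (L := L) (V := V)
    have hrank : finrank K (V ⧸ W) + finrank K W = finrank K V :=
      W.toSubmodule.finrank_quotient_add_finrank
    have : LieModule.IsNilpotent (LieAlgebra.derivedSeries K L 1) (V ⧸ W) :=
      Function.Surjective.lieModuleIsNilpotent (R := K)
        (L := LieAlgebra.derivedSeries K L 1) (f := LieHom.id) (g := W.toSubmodule.mkQ)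
        (fun _ _ => rfl) Function.surjective_id (Submodule.mkQ_surjective _)
    exact .of_lieSubmodule_of_quotient W (isTriangulable_of_finrank_le_one hW.le)
      (ih _ (by omega) rfl)

theorem isTriangulable_iff_isNilpotent_derivedSeries :
    IsTriangulable K L V ↔ LieModule.IsNilpotent (LieAlgebra.derivedSeries K L 1) V :=
  ⟨fun h => (lieIdeal_isNilpotent_iff_forall_isNilpotent_toEnd _).2 fun _ => h.isNilpotent_toEnd,
    fun _ => isTriangulable_of_isNilpotent_derivedSeries⟩

end IsAlgClosed

open scoped TensorProduct in
theorem isTriangulable_baseChange_iff_isNilpotent_derivedSeries {F K L V : Type*} [Field F]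
    [Field K] [IsAlgClosed K] [Algebra F K] [LieRing L] [LieAlgebra F L] [AddCommGroup V]
    [Module F V] [FiniteDimensional F V] [LieRingModule L V] [LieModule F L V] :
    IsTriangulable K (K ⊗[F] L) (K ⊗[F] V) ↔
      LieModule.IsNilpotent (LieAlgebra.derivedSeries F L 1) V := by
  rw [isTriangulable_iff_isNilpotent_derivedSeries, LieAlgebra.derivedSeries_baseChange,
    lieIdeal_isNilpotent_baseChange_iff]

end Triangulable

section Leibniz

variable {F M : Type*} [Field F] [AddCommGroup M] [Module F M] {m : M →ₗ[F] M →ₗ[F] M}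
  {S : Submodule F M}

lemma IsLeibniz.map_mul (hm : IsLeibniz m) (x y : M) :
    m (m x y) = ⁅(m x : Module.End F M), (m y : Module.End F M)⁆ := by
  ext z
  simp [Ring.lie_def, hm x y z]

/-- The Lie algebra of left multiplication operators by elements of a subalgebra of a Leibniz
algebra. -/
def leftMulLieSubalgebra (hm : IsLeibniz m) (hS : IsSubalg m S) :
    LieSubalgebra F (Module.End F M) where
  toSubmodule := S.map m
  lie_mem' := by
    rintro _ _ ⟨x, hx, rfl⟩ ⟨y, hy, rfl⟩
    exact ⟨m x y, hS x hx y hy, hm.map_mul x y⟩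

lemma map_derivedSeries_leftMulLieSubalgebra (hm : IsLeibniz m) (hS : IsSubalg m S) :
    (LieAlgebra.derivedSeries F (leftMulLieSubalgebra hm hS) 1).toSubmodule.map
      (leftMulLieSubalgebra hm hS).toSubmodule.subtype = (mprod m S S).map m := by
  have hspan : (LieAlgebra.derivedSeries F (leftMulLieSubalgebra hm hS) 1).toSubmodule =
      Submodule.span F {⁅f, g⁆ | (f) (g)} := LieAlgebra.coe_derivedSeries_one_eq F _
  rw [hspan, mprod, Submodule.map₂_eq_span_image2, Submodule.map_span, Submodule.map_span]
  congr 1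
  ext f
  constructor
  · rintro ⟨_, ⟨⟨_, x, hx, rfl⟩, ⟨_, y, hy, rfl⟩, rfl⟩, rfl⟩
    exact ⟨m x y, ⟨x, hx, y, hy, rfl⟩, hm.map_mul x y⟩
  · rintro ⟨_, ⟨x, hx, y, hy, rfl⟩, rfl⟩
    exact ⟨_, ⟨⟨m x, x, hx, rfl⟩, ⟨m y, y, hy, rfl⟩, rfl⟩, (hm.map_mul x y).symm⟩

open scoped TensorProduct in
lemma isTriangulableOn_iff_isTriangulable (hm : IsLeibniz m) (hS : IsSubalg m S) :
    IsTriangulableOn m S ↔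
      IsTriangulable (AlgebraicClosure F)
        (AlgebraicClosure F ⊗[F] leftMulLieSubalgebra hm hS) (AlgebraicClosure F ⊗[F] M) := by
  rw [isTriangulable_baseChange_iff]
  refine exists_congr fun n => exists_congr fun b => ⟨?_, fun h x hx => h ⟨m x, x, hx, rfl⟩⟩
  rintro h ⟨_, x, hx, rfl⟩
  exact h x hx

lemma isNilOn_mprod_self_iff_isNilpotent_derivedSeries [FiniteDimensional F M]
    (hm : IsLeibniz m) (hS : IsSubalg m S) :
    IsNilOn m (mprod m S S) ↔
      LieModule.IsNilpotent (LieAlgebra.derivedSeries F (leftMulLieSubalgebra hm hS) 1) M := by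
  have hmap : IsNilOn m (mprod m S S) ↔ ∀ f ∈ (mprod m S S).map m, IsNilpotent f := by
    simp only [IsNilOn, Submodule.mem_map, forall_exists_index, and_imp, forall_apply_eq_imp_iff₂]
  rw [hmap, ← map_derivedSeries_leftMulLieSubalgebra hm hS,
    lieIdeal_isNilpotent_iff_forall_isNilpotent_toEnd]
  exact Set.forall_mem_image

lemma IsSubalg.isIdealOf_mprod_self (hS : IsSubalg m S) : IsIdealOf m S (mprod m S S) := by
  have hle : mprod m S S ≤ S := Submodule.map₂_le.2 hS
  exact ⟨hle, fun x hx y hy =>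
    ⟨Submodule.apply_mem_map₂ m hx (hle hy), Submodule.apply_mem_map₂ m (hle hy) hx⟩⟩

theorem isTriangulableOn_iff_isNilOn_mprod_self [FiniteDimensional F M] (hm : IsLeibniz m)
    (hS : IsSubalg m S) : IsTriangulableOn m S ↔ IsNilOn m (mprod m S S) := by
  rw [isTriangulableOn_iff_isTriangulable hm hS,
    isTriangulable_baseChange_iff_isNilpotent_derivedSeries,
    isNilOn_mprod_self_iff_isNilpotent_derivedSeries hm hS]

end Leibniz

/-- Let `M` be a finite-dimensional Leibniz algebra over `F` and `S` a
subalgebra of `M`. Then `S` is triangulable on `M` if and only if `S² = S·S` is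
contained in `nil(S)`, the largest ideal of `S` that is nil on `M` (given here via the
hypothesis that `N` is the greatest element of the set of ideals of `S` nil on `M`). -/
theorem triangulable_iff_square_le_nil
    {F : Type*} [Field F] {M : Type*} [AddCommGroup M] [Module F M]
    [FiniteDimensional F M]
    (m : M →ₗ[F] M →ₗ[F] M) (hm : IsLeibniz m)
    (S : Submodule F M) (hS : IsSubalg m S)
    (N : Submodule F M)
    (hN : IsGreatest {I : Submodule F M | IsIdealOf m S I ∧ IsNilOn m I} N) :
    IsTriangulableOn m S ↔ mprod m S S ≤ N := by
  rw [isTriangulableOn_iff_isNilOn_mprod_self hm hS]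
  obtain ⟨⟨-, hNnil⟩, hNmax⟩ := hN
  exact ⟨fun hnil => hNmax ⟨hS.isIdealOf_mprod_self, hnil⟩, fun hle x hx => hNnil x (hle hx)⟩
end

section
/- Let M be a finite-dimensional Leibniz algebra over a field F and let L be an ideal of M. Then L is triangulable on M if and only if L² = L·L is nilpotent. -/
/-!
Basic theory of (left) Leibniz algebras, formalized over an arbitrary field `F`.
A Leibniz algebra structure on an `F`-vector space `L` is given by a bilinear
multiplication `m : L →ₗ[F] L →ₗ[F] L` satisfying the left Leibniz identity.
-/

open Submodule Module

/-!
Over an algebraically closed field, a set `S` of operators on a finite-dimensional space that is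
closed under commutators can be made simultaneously upper triangular if and only if its commutators
generate a nilpotent multiplicative family. Commutators of upper triangular matrices are strictly
upper triangular, which gives one direction. For the other, let `Q ⋖ P` be a cover in the lattice of
`S`-invariant subspaces. By Engel's argument and minimality the commutators map `P` into `Q`, so `S`
acts on `P / Q` by commuting operators; by Schur's argument it acts by scalars, and any `w ∈ P \ Q`
extends a triangularizing basis of `Q`.

For a Leibniz algebra, `[L_x, L_y] = L_{xy}`, so the commutators of the left multiplications by
elements of `I` are the left multiplications by products from `I`. Since `I² · M ⊆ I²`, the algebra
`I²` is nilpotent exactly when these operators form a nilpotent family on `M`, and this does not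
change under extension of scalars.
-/

section Commutators

open scoped Pointwise

/-- The set of commutators `⁅s, t⁆` of elements of `S`. The set `S` is closed under the bracket
when `bracketSet S ⊆ S`; the span of `bracketSet S` then plays the role of the derived algebra. -/
def bracketSet {A : Type*} [Bracket A A] (S : Set A) : Set A :=
  Set.image2 (⁅·, ·⁆) S S

theorem bracket_mem_bracketSet {A : Type*} [Bracket A A] {S : Set A} {s t : A}
    (hs : s ∈ S) (ht : t ∈ S) : ⁅s, t⁆ ∈ bracketSet S :=
  Set.mem_image2_of_mem hs ht

theorem image_bracketSet {A B G : Type*} [Ring A] [Ring B] [FunLike G A B]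
    [RingHomClass G A B] (f : G) (S : Set A) : f '' bracketSet S = bracketSet (f '' S) :=
  Set.image_image2_distrib fun s t => by simp only [Ring.lie_def, map_sub, map_mul]

theorem isNilpotent_span_iff {R A : Type*} [CommSemiring R] [Semiring A] [Algebra R A] {X : Set A} :
    IsNilpotent (span R X) ↔ ∃ n, X ^ n ⊆ {0} := by
  simp only [IsNilpotent, span_pow, Submodule.zero_eq_bot, span_eq_bot, Set.subset_singleton_iff]

theorem isNilpotent_span_image_iff {R K A B : Type*} [CommSemiring R] [CommSemiring K]
    [Semiring A] [Algebra R A] [Semiring B] [Algebra R B] [Algebra K B]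
    {f : A →ₐ[R] B} (hf : Function.Injective f) {X : Set A} :
    IsNilpotent (span K (f '' X)) ↔ IsNilpotent (span R X) := by
  simp only [isNilpotent_span_iff, ← Set.image_pow, Set.subset_singleton_iff,
    Set.forall_mem_image, map_eq_zero_iff f hf]

end Commutators

section UpperTriangular

theorem isUpperTriangular_mul_apply_self {R ι : Type*} [NonUnitalNonAssocSemiring R] [Fintype ι]
    [LinearOrder ι] {X Y : Matrix ι ι R} (hX : X.IsUpperTriangular) (hY : Y.IsUpperTriangular)
    (i : ι) : (X * Y) i i = X i i * Y i i := by
  rw [Matrix.mul_apply]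
  refine Finset.sum_eq_single i (fun a _ ha => ?_) (by simp)
  rcases lt_or_gt_of_ne ha with ha | ha
  · exact mul_eq_zero_of_left (hX ha) _
  · exact mul_eq_zero_of_right _ (hY ha)

/-- The `n × n` matrices vanishing strictly below the `k`-th superdiagonal: `upperBand R n 0`
consists of the upper triangular matrices, `upperBand R n 1` of the strictly upper triangular
ones. -/
def upperBand (R : Type*) [CommSemiring R] (n k : ℕ) :
    Submodule R (Matrix (Fin n) (Fin n) R) where
  carrier := {X | ∀ i j : Fin n, (j : ℕ) < i + k → X i j = 0}
  add_mem' hX hY i j hij := by simp [hX i j hij, hY i j hij]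
  zero_mem' _ _ _ := rfl
  smul_mem' c X hX i j hij := by simp [hX i j hij]

section

variable {R : Type*} [CommSemiring R] {n : ℕ}

theorem upperBand_mul_le (k l : ℕ) : upperBand R n k * upperBand R n l ≤ upperBand R n (k + l) := by
  refine mul_le.2 fun X hX Y hY i j hij => ?_
  rw [Matrix.mul_apply]
  refine Finset.sum_eq_zero fun a _ => ?_
  rcases lt_or_ge (a : ℕ) (i + k) with ha | ha
  · exact mul_eq_zero_of_left (hX i a ha) _
  · exact mul_eq_zero_of_right _ (hY a j (by lia))

theorem upperBand_one_pow_le (k : ℕ) : upperBand R n 1 ^ k ≤ upperBand R n k := by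
  induction k with
  | zero => exact one_le.2 fun i j hij => Matrix.one_apply_ne (Fin.ne_of_gt hij)
  | succ k ih => exact (mul_le_mul_left ih _).trans (upperBand_mul_le k 1)

theorem isNilpotent_upperBand_one : IsNilpotent (upperBand R n 1) := by
  refine ⟨n, (Submodule.eq_bot_iff _).2 fun X hX => ?_⟩
  ext i j
  exact upperBand_one_pow_le n hX i j (by lia)

end

theorem bracket_mem_upperBand_one {R : Type*} [CommRing R] {n : ℕ}
    {X Y : Matrix (Fin n) (Fin n) R} (hX : X.IsUpperTriangular) (hY : Y.IsUpperTriangular) :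
    ⁅X, Y⁆ ∈ upperBand R n 1 := by
  intro i j hij
  rw [Ring.lie_def, Matrix.sub_apply]
  rcases (show j ≤ i from Nat.lt_succ_iff.1 hij).lt_or_eq with hji | rfl
  · rw [hX.mul hY hji, hY.mul hX hji, sub_zero]
  · rw [isUpperTriangular_mul_apply_self hX hY, isUpperTriangular_mul_apply_self hY hX, mul_comm,
      sub_self]

end UpperTriangular

section InvariantSubspaces

open scoped Pointwise

/-- The lattice of submodules invariant under every operator in `S`. -/
def invariantLattice {R V : Type*} [Semiring R] [AddCommMonoid V] [Module R V]
    (S : Set (End R V)) : Sublattice (Submodule R V) :=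
  ⨅ s ∈ S, s.invtSubmodule

theorem mem_invariantLattice {R V : Type*} [Semiring R] [AddCommMonoid V] [Module R V]
    {S : Set (End R V)} {P : Submodule R V} :
    P ∈ invariantLattice S ↔ ∀ s ∈ S, ∀ v ∈ P, s v ∈ P := by
  simp only [invariantLattice, Sublattice.mem_iInf, End.mem_invtSubmodule_iff_forall_mem_of_mem]

/- The idea of Engel's theorem: if every vector of `P` outside `Q` were moved outside `Q` by some
operator in `T`, products of operators in `T` of any length would fail to vanish. -/
theorem exists_notMem_forall_apply_mem {R V : Type*} [CommSemiring R] [AddCommMonoid V]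
    [Module R V] {T : Set (End R V)} (hT : IsNilpotent (span R T))
    {P Q : Submodule R V} (hP : P ∈ invariantLattice T) (hPQ : ¬ P ≤ Q) :
    ∃ v ∈ P, v ∉ Q ∧ ∀ t ∈ T, t v ∈ Q := by
  by_contra! hno
  have mem_of_pow (n : ℕ) : ∀ v ∈ P, (∀ u ∈ T ^ n, u v ∈ Q) → v ∈ Q := by
    induction n with
    | zero => exact fun v _ h => h 1 (by simp)
    | succ n ih =>
      intro v hv h
      by_contra hvQ
      obtain ⟨t, ht, htv⟩ := hno v hv hvQ
      refine htv (ih _ (mem_invariantLattice.1 hP t ht v hv) fun u hu => ?_)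
      exact h (u * t) (pow_succ T n ▸ Set.mul_mem_mul hu ht)
  obtain ⟨n, hn⟩ := isNilpotent_span_iff.1 hT
  refine hPQ fun v hv => mem_of_pow n v hv fun u hu => ?_
  simp [Set.mem_singleton_iff.1 (hn hu)]

theorem apply_mem_of_mem_bracketSet_of_covBy {R V : Type*} [CommRing R] [AddCommGroup V]
    [Module R V] {S : Set (End R V)} (hS : bracketSet S ⊆ S)
    (hnil : IsNilpotent (span R (bracketSet S))) {Q P : invariantLattice S} (hQP : Q ⋖ P)
    {t : End R V} (ht : t ∈ bracketSet S) {v : V} (hv : v ∈ P.1) : t v ∈ Q.1 := by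
  have hQ := mem_invariantLattice.1 Q.2
  have hP := mem_invariantLattice.1 P.2
  let E : Submodule R V := P ⊓ ⨅ t ∈ bracketSet S, Q.1.comap t
  have mem_E {v : V} : v ∈ E ↔ v ∈ P.1 ∧ ∀ t ∈ bracketSet S, t v ∈ Q.1 := by
    simp only [E, mem_inf, mem_iInf, mem_comap]
  have hE : E ∈ invariantLattice S := by
    refine mem_invariantLattice.2 fun s hs v hv => mem_E.2 ⟨hP s hs v (mem_E.1 hv).1, ?_⟩
    intro t ht
    have hts : t (s v) = ⁅t, s⁆ v + s (t v) := by simp [Ring.lie_def]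
    rw [hts]
    exact add_mem ((mem_E.1 hv).2 _ (bracket_mem_bracketSet (hS ht) hs))
      (hQ s hs _ ((mem_E.1 hv).2 t ht))
  have hQE : Q ≤ ⟨E, hE⟩ := fun v hv => mem_E.2 ⟨hQP.le hv, fun t ht => hQ t (hS ht) v hv⟩
  rcases hQP.eq_or_eq hQE (Subtype.coe_le_coe.1 inf_le_left) with hEQ | hEP
  · obtain ⟨v, hvP, hvQ, hTv⟩ := exists_notMem_forall_apply_mem hnil
      (mem_invariantLattice.2 fun t ht => hP t (hS ht)) hQP.lt.not_ge
    exact absurd (hEQ.le (mem_E.2 ⟨hvP, hTv⟩)) hvQ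
  · exact (mem_E.1 (hEP.ge hv)).2 t ht

variable {K V : Type*} [Field K] [AddCommGroup V] [Module K V] {S : Set (End K V)}

theorem exists_sub_smul_mem_of_lt [IsAlgClosed K] [FiniteDimensional K V] {s : End K V}
    {Q P : Submodule K V} (hQP : Q < P) (hQ : Q ∈ s.invtSubmodule) (hP : P ∈ s.invtSubmodule) :
    ∃ a : K, ∃ v ∈ P, v ∉ Q ∧ s v - a • v ∈ Q := by
  let Q' : Submodule K P := Q.submoduleOf P
  have hQ' : Q' ≤ Q'.comap (s.restrict hP) := fun v hv => hQ hv
  have : Nontrivial (P ⧸ Q') :=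
    Submodule.Quotient.nontrivial_iff.2 (mt submoduleOf_eq_top.1 hQP.not_ge)
  obtain ⟨a, ha⟩ := End.exists_eigenvalue (Q'.mapQ Q' (s.restrict hP) hQ')
  obtain ⟨w, hw⟩ := ha.exists_hasEigenvector
  obtain ⟨v, rfl⟩ := Submodule.Quotient.mk_surjective Q' w
  refine ⟨a, v, v.2, fun hv => hw.2 ((Submodule.Quotient.mk_eq_zero Q').2 hv), ?_⟩
  exact (Submodule.Quotient.eq Q').1 hw.apply_eq_smul

theorem exists_forall_sub_smul_mem_of_covBy [IsAlgClosed K] [FiniteDimensional K V]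
    {Q P : invariantLattice S} (hQP : Q ⋖ P)
    (hcomm : ∀ t ∈ bracketSet S, ∀ v ∈ P.1, t v ∈ Q.1) {s : End K V} (hs : s ∈ S) :
    ∃ a : K, ∀ v ∈ P.1, s v - a • v ∈ Q.1 := by
  have hQ := mem_invariantLattice.1 Q.2
  have hP := mem_invariantLattice.1 P.2
  obtain ⟨a, v, hvP, hvQ, hv⟩ := exists_sub_smul_mem_of_lt hQP.lt (hQ s hs) (hP s hs)
  let E : Submodule K V := P ⊓ Q.1.comap (s - a • LinearMap.id)
  have hE : E ∈ invariantLattice S := by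
    refine mem_invariantLattice.2 fun t ht u ⟨huP, huQ⟩ => ⟨hP t ht u huP, ?_⟩
    have hst : (s - a • LinearMap.id : End K V) (t u) = ⁅s, t⁆ u + t (s u - a • u) := by
      simp [Ring.lie_def]
    rw [SetLike.mem_coe, mem_comap, hst]
    exact add_mem (hcomm _ (bracket_mem_bracketSet hs ht) u huP) (hQ t ht _ huQ)
  have hQE : Q ≤ ⟨E, hE⟩ :=
    fun u hu => ⟨hQP.le hu, sub_mem (hQ s hs u hu) (smul_mem _ a hu)⟩
  rcases hQP.eq_or_eq hQE (Subtype.coe_le_coe.1 inf_le_left) with hEQ | hEP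
  · exact absurd (hEQ.le ⟨hvP, hv⟩) hvQ
  · exact ⟨a, fun u hu => (hEP.ge hu).2⟩

theorem exists_notMem_forall_sub_smul_mem [IsAlgClosed K] [FiniteDimensional K V]
    (hS : bracketSet S ⊆ S) (hnil : IsNilpotent (span K (bracketSet S)))
    {Q : Submodule K V} (hQ : Q ∈ invariantLattice S) (hQtop : Q ≠ ⊤) :
    ∃ w ∉ Q, ∀ s ∈ S, ∃ a : K, s w - a • w ∈ Q := by
  have htop : (⊤ : Submodule K V) ∈ invariantLattice S :=
    mem_invariantLattice.2 fun _ _ _ _ => mem_top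
  have hmax : ¬ IsMax (⟨Q, hQ⟩ : invariantLattice S) := fun h =>
    hQtop (top_le_iff.1 (h (b := ⟨⊤, htop⟩) (Subtype.coe_le_coe.1 le_top)))
  obtain ⟨P, hQP⟩ := exists_covBy_of_wellFoundedLT hmax
  obtain ⟨w, hwP, hwQ⟩ := SetLike.exists_of_lt (show Q < P.1 from hQP.lt)
  refine ⟨w, hwQ, fun s hs => ?_⟩
  obtain ⟨a, ha⟩ := exists_forall_sub_smul_mem_of_covBy hQP
    (fun t ht v hv => apply_mem_of_mem_bracketSet_of_covBy hS hnil hQP ht hv) hs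
  exact ⟨a, ha w hwP⟩

end InvariantSubspaces

section Triangularization

/-- A set of endomorphisms is simultaneously triangularizable if some basis makes all of their
matrices upper triangular. -/
def IsSimultaneouslyTriangularizable {R V : Type*} [CommSemiring R] [AddCommMonoid V] [Module R V]
    (S : Set (End R V)) : Prop :=
  ∃ (n : ℕ) (b : Basis (Fin n) R V), ∀ s ∈ S, (LinearMap.toMatrix b b s).IsUpperTriangular

theorem IsSimultaneouslyTriangularizable.isNilpotent_span_bracketSet {R V : Type*} [CommRing R]
    [AddCommGroup V] [Module R V] {S : Set (End R V)} (hS : IsSimultaneouslyTriangularizable S) :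
    IsNilpotent (span R (bracketSet S)) := by
  obtain ⟨n, b, hb⟩ := hS
  let f : End R V →ₐ[R] Matrix (Fin n) (Fin n) R := LinearMap.toMatrixAlgEquiv b
  have hf : Function.Injective f := (LinearMap.toMatrixAlgEquiv b).injective
  have hle : span R (f '' bracketSet S) ≤ upperBand R n 1 := by
    rw [image_bracketSet, span_le]
    rintro _ ⟨_, ⟨s, hs, rfl⟩, _, ⟨t, ht, rfl⟩, rfl⟩
    exact bracket_mem_upperBand_one (hb s hs) (hb t ht)
  obtain ⟨k, hk⟩ := isNilpotent_upperBand_one (R := R) (n := n)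
  rw [← isNilpotent_span_image_iff (K := R) hf]
  exact ⟨k, eq_bot_iff.2 ((pow_le_pow_left' hle k).trans hk.le)⟩

theorem toMatrix_isUpperTriangular_iff {R V ι : Type*} [CommSemiring R] [AddCommMonoid V]
    [Module R V] [Fintype ι] [LinearOrder ι] (b : Basis ι R V) (s : End R V) :
    (LinearMap.toMatrix b b s).IsUpperTriangular ↔ ∀ j, s (b j) ∈ span R (b '' Set.Iic j) := by
  simp only [Matrix.IsUpperTriangular, Matrix.BlockTriangular, LinearMap.toMatrix_apply,
    b.mem_span_image, Set.subset_def, Finset.mem_coe, Finsupp.mem_support_iff, Set.mem_Iic, id]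
  exact ⟨fun h j i hi => not_lt.1 fun hij => hi (h hij),
    fun h i j hij => by_contra fun hi => (h j i hi).not_gt hij⟩

variable {K V : Type*} [Field K] [AddCommGroup V] [Module K V] {S : Set (End K V)}

theorem exists_linearIndependent_forall_apply_mem_span [IsAlgClosed K] [FiniteDimensional K V]
    (hS : bracketSet S ⊆ S) (hnil : IsNilpotent (span K (bracketSet S)))
    {d : ℕ} (hd : d ≤ finrank K V) :
    ∃ v : Fin d → V, LinearIndependent K v ∧ ∀ s ∈ S, ∀ j, s (v j) ∈ span K (v '' Set.Iic j) := by
  induction d with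
  | zero => exact ⟨Fin.elim0, linearIndependent_empty_type, fun _ _ j => j.elim0⟩
  | succ d ih =>
    obtain ⟨v, hli, hv⟩ := ih (by lia)
    have hQ : span K (Set.range v) ∈ invariantLattice S := by
      refine mem_invariantLattice.2 fun s hs => ?_
      change span K (Set.range v) ≤ (span K (Set.range v)).comap s
      rw [span_le, Set.range_subset_iff]
      exact fun j => span_mono (Set.image_subset_range _ _) (hv s hs j)
    have hQtop : span K (Set.range v) ≠ ⊤ := fun h => by
      have hrank := finrank_span_eq_card hli
      rw [h, finrank_top, Fintype.card_fin] at hrank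
      lia
    obtain ⟨w, hw, hws⟩ := exists_notMem_forall_sub_smul_mem hS hnil hQ hQtop
    refine ⟨Fin.snoc v w, linearIndependent_finSnoc.2 ⟨hli, hw⟩, fun s hs j => ?_⟩
    cases j using Fin.lastCases with
    | last =>
      obtain ⟨a, ha⟩ := hws s hs
      have hIic : Set.range v ⊆ (Fin.snoc v w : Fin (d + 1) → V) '' Set.Iic (Fin.last d) := by
        rintro _ ⟨i, rfl⟩
        exact ⟨i.castSucc, Fin.le_last _, by simp⟩
      rw [Fin.snoc_last, ← sub_add_cancel (s w) (a • w)]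
      exact add_mem (span_mono hIic ha)
        (smul_mem _ _ (subset_span ⟨Fin.last d, Set.mem_Iic.2 le_rfl, by simp⟩))
    | cast j =>
      rw [Fin.snoc_castSucc]
      refine span_mono ?_ (hv s hs j)
      rintro _ ⟨i, hi, rfl⟩
      exact ⟨i.castSucc, Fin.castSucc_le_castSucc_iff.2 hi, by simp⟩

theorem isSimultaneouslyTriangularizable_of_isNilpotent [IsAlgClosed K] [FiniteDimensional K V]
    (hS : bracketSet S ⊆ S) (hnil : IsNilpotent (span K (bracketSet S))) :
    IsSimultaneouslyTriangularizable S := by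
  obtain ⟨v, hli, hv⟩ := exists_linearIndependent_forall_apply_mem_span hS hnil le_rfl
  let b : Basis (Fin (finrank K V)) K V :=
    .mk hli (hli.span_eq_top_of_card_eq_finrank' (by simp)).ge
  refine ⟨_, b, fun s hs => (toMatrix_isUpperTriangular_iff b s).2 fun j => ?_⟩
  simpa only [b, Basis.coe_mk] using hv s hs j

theorem isSimultaneouslyTriangularizable_iff_isNilpotent [IsAlgClosed K] [FiniteDimensional K V]
    (hS : bracketSet S ⊆ S) :
    IsSimultaneouslyTriangularizable S ↔ IsNilpotent (span K (bracketSet S)) :=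
  ⟨IsSimultaneouslyTriangularizable.isNilpotent_span_bracketSet,
    isSimultaneouslyTriangularizable_of_isNilpotent hS⟩

end Triangularization

section Leibniz

variable {F : Type*} [Field F] {M : Type*} [AddCommGroup M] [Module F M] {m : M →ₗ[F] M →ₗ[F] M}

/-- The multiplication as a map into the endomorphism algebra, so that left multiplication
operators can be composed. -/
def leftMul (m : M →ₗ[F] M →ₗ[F] M) : M →ₗ[F] End F M := m

theorem leftMul_apply (x y : M) : leftMul m x y = m x y := rfl

theorem isTriangulableOn_iff_isSimultaneouslyTriangularizable (I : Submodule F M) :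
    IsTriangulableOn m I ↔ IsSimultaneouslyTriangularizable
      (End.baseChangeHom F (AlgebraicClosure F) M '' (leftMul m '' I)) := by
  simp only [IsTriangulableOn, IsSimultaneouslyTriangularizable, Set.forall_mem_image]
  rfl

theorem IsLeibniz.lie_leftMul (hm : IsLeibniz m) (x y : M) :
    ⁅leftMul m x, leftMul m y⁆ = leftMul m (m x y) := by
  ext c
  rw [Ring.lie_def, LinearMap.sub_apply, End.mul_apply, End.mul_apply]
  simp only [leftMul_apply, hm x y c, add_sub_cancel_right]

theorem IsLeibniz.bracketSet_leftMul_image (hm : IsLeibniz m) (S : Set M) :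
    bracketSet (leftMul m '' S) = leftMul m '' Set.image2 (m · ·) S S := by
  rw [bracketSet, Set.image2_image_left, Set.image2_image_right, Set.image_image2]
  exact Set.image2_congr fun x _ y _ => hm.lie_leftMul x y

theorem IsLeibniz.span_bracketSet_leftMul_image (hm : IsLeibniz m) (I : Submodule F M) :
    span F (bracketSet (leftMul m '' I)) = (mprod m I I).map (leftMul m) := by
  rw [hm.bracketSet_leftMul_image, mprod, map₂_eq_span_image2, map_span]

theorem mprod_eq_map_leftMul_smul (P Q : Submodule F M) :
    mprod m P Q = P.map (leftMul m) • Q := by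
  refine le_antisymm (map₂_le.2 fun x hx y hy => ?_) (smul_le.2 ?_)
  · exact smul_mem_smul (r := leftMul m x) (mem_map_of_mem hx) hy
  · rintro _ ⟨x, hx, rfl⟩ y hy
    exact apply_mem_map₂ m hx hy

theorem lcSeries_eq_map_leftMul_pow_smul (N : Submodule F M) (k : ℕ) :
    lcSeries m N k = N.map (leftMul m) ^ k • N := by
  induction k with
  | zero => rw [pow_zero, Submodule.one_smul, lcSeries]
  | succ k ih =>
    rw [lcSeries, mprod_eq_map_leftMul_smul, ih, ← Submodule.smul_assoc, pow_succ', smul_eq_mul]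

theorem isNilpotentSub_iff_isNilpotent_map_leftMul {N : Submodule F M}
    (hN : ∀ x ∈ N, ∀ a, m x a ∈ N) :
    IsNilpotentSub m N ↔ IsNilpotent (N.map (leftMul m)) := by
  simp only [IsNilpotentSub, lcSeries_eq_map_leftMul_pow_smul]
  constructor
  · rintro ⟨k, hk⟩
    refine ⟨k + 1, (Submodule.eq_bot_iff _).2 fun u hu => LinearMap.ext fun a => ?_⟩
    have hle : N.map (leftMul m) • (⊤ : Submodule F M) ≤ N := by
      rw [← mprod_eq_map_leftMul_smul]
      exact map₂_le.2 fun x hx a _ => hN x hx a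
    have hu' : u a ∈ N.map (leftMul m) ^ (k + 1) • (⊤ : Submodule F M) :=
      smul_mem_smul hu mem_top
    rw [pow_succ, ← smul_eq_mul, Submodule.smul_assoc] at hu'
    exact (mem_bot F).1 (hk ▸ smul_mono_right _ hle hu')
  · rintro ⟨k, hk⟩
    exact ⟨k, by rw [hk, Submodule.zero_eq_bot, bot_smul]⟩

theorem IsLeibniz.mprod_self_apply_mem (hm : IsLeibniz m) {I : Submodule F M}
    (hI : ∀ x ∈ I, ∀ a, m x a ∈ I) :
    ∀ z ∈ mprod m I I, ∀ a, m z a ∈ mprod m I I := by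
  intro z hz a
  suffices mprod m I I ≤ (mprod m I I).comap (m.flip a) from this hz
  refine map₂_le.2 fun x hx y hy => ?_
  rw [mem_comap, LinearMap.flip_apply, ← leftMul_apply, ← hm.lie_leftMul]
  exact sub_mem (apply_mem_map₂ m hx (hI y hy a)) (apply_mem_map₂ m hy (hI x hx a))

theorem ideal_triangulable_iff_square_nilpotent_general [FiniteDimensional F M] (hm : IsLeibniz m)
    {I : Submodule F M} (hI : ∀ x ∈ I, ∀ a, m x a ∈ I) :
    IsTriangulableOn m I ↔ IsNilpotentSub m (mprod m I I) := by
  let β := End.baseChangeHom F (AlgebraicClosure F) M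
  have hβ : Function.Injective β := LinearMap.baseChangeHom_injective F M (AlgebraicClosure F)
  have hclosed : bracketSet (β '' (leftMul m '' I)) ⊆ β '' (leftMul m '' I) := by
    rw [← image_bracketSet, hm.bracketSet_leftMul_image]
    exact Set.image_mono (Set.image_mono (Set.image2_subset_iff.2 fun x hx y _ => hI x hx y))
  calc IsTriangulableOn m I
      ↔ IsSimultaneouslyTriangularizable (β '' (leftMul m '' I)) :=
        isTriangulableOn_iff_isSimultaneouslyTriangularizable I
    _ ↔ IsNilpotent (span (AlgebraicClosure F) (bracketSet (β '' (leftMul m '' I)))) :=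
        isSimultaneouslyTriangularizable_iff_isNilpotent hclosed
    _ ↔ IsNilpotent (span F (bracketSet (leftMul m '' I))) := by
        rw [← image_bracketSet, isNilpotent_span_image_iff hβ]
    _ ↔ IsNilpotent ((mprod m I I).map (leftMul m)) := by
        rw [hm.span_bracketSet_leftMul_image]
    _ ↔ IsNilpotentSub m (mprod m I I) :=
        (isNilpotentSub_iff_isNilpotent_map_leftMul (hm.mprod_self_apply_mem hI)).symm

end Leibniz

/-- Let `M` be a finite-dimensional Leibniz algebra over `F` and `I`
an ideal of `M`. Then `I` is triangulable on `M` if and only if `I² = I·I` is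
nilpotent. -/
theorem ideal_triangulable_iff_square_nilpotent
    {F : Type*} [Field F] {M : Type*} [AddCommGroup M] [Module F M]
    [FiniteDimensional F M]
    (m : M →ₗ[F] M →ₗ[F] M) (hm : IsLeibniz m)
    (I : Submodule F M) (hI : IsIdeal m I) :
    IsTriangulableOn m I ↔ IsNilpotentSub m (mprod m I I) := by
  exact ideal_triangulable_iff_square_nilpotent_general hm fun x hx a => (hI a x hx).2
end
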